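/- arXiv:math/0210115 — 2 statements merged into one kernel-verified Lean document; each statement's English description precedes it below -/
import Mathlib

section
/- For every odd m ≥ 3 and n ≥ 2, the topological complexity of the configuration space C_n(ℝ^m) of n ordered distinct points in ℝ^m equals 2n − 1. -/
/-- The space of continuous paths `[0,1] → X`, with the compact-open topology. -/
abbrev PathSpace (X : Type*) [TopologicalSpace X] := C(unitInterval, X)

/-- `U ⊆ X × X` admits a continuous section of the path fibration
`π : PX → X × X`, `π(γ) = (γ 0, γ 1)`. -/
def HasMotionPlanningSection (X : Type*) [TopologicalSpace X] (U : Set (X × X)) : Prop :=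
  ∃ s : C(U, PathSpace X), ∀ p : U, s p 0 = (p : X × X).1 ∧ s p 1 = (p : X × X).2

/-- `X × X` can be covered by `k` open sets, over each of which the path
fibration admits a continuous section. -/
def HasTCCover (X : Type*) [TopologicalSpace X] (k : ℕ) : Prop :=
  ∃ U : Fin k → Set (X × X), (∀ i, IsOpen (U i)) ∧ (⋃ i, U i) = Set.univ ∧
    ∀ i, HasMotionPlanningSection X (U i)

/-- The topological complexity of `X` (in the unnormalized convention of Farber,
so that `TopComplexity(point) = 1`), as an extended natural number. -/
noncomputable def TopComplexity (X : Type*) [TopologicalSpace X] : ℕ∞ :=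
  sInf {N : ℕ∞ | ∃ k : ℕ, N = k ∧ HasTCCover X k}

/-- The configuration space of `n` ordered distinct points in `ℝ^m`. -/
abbrev ConfSpace (n m : ℕ) := {f : Fin n → (Fin m → ℝ) // Function.Injective f}

section UpperBound

open scoped unitInterval

theorem HasMotionPlanningSection.of_homotopic {X : Type*} [TopologicalSpace X] {U : Set (X × X)}
    {f g : C(U, X)} (hf : ∀ p : U, f p = p.1.1) (hg : ∀ p : U, g p = p.1.2)
    (h : f.Homotopic g) : HasMotionPlanningSection X U := by
  obtain ⟨H⟩ := h
  refine ⟨(H.toContinuousMap.comp ContinuousMap.prodSwap).curry, fun p => ⟨?_, ?_⟩⟩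
  · exact (H.apply_zero p).trans (hf p)
  · exact (H.apply_one p).trans (hg p)

theorem HasMotionPlanningSection.iUnion {X κ : Type*} [TopologicalSpace X] {V : κ → Set (X × X)}
    (hV : ∀ i, IsOpen (V i)) (hdisj : ∀ i j p, p ∈ V i → p ∈ V j → i = j)
    (h : ∀ i, HasMotionPlanningSection X (V i)) : HasMotionPlanningSection X (⋃ i, V i) := by
  choose s hs using h
  let S : κ → Set (⋃ i, V i) := fun i => {p | p.1 ∈ V i}
  let φ : ∀ i, C(S i, PathSpace X) := fun i =>
    (s i).comp ⟨fun p => ⟨p.1.1, p.2⟩, by fun_prop⟩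
  have hφ : ∀ (i j) (x : (⋃ i, V i : Set (X × X))) (hxi : x ∈ S i) (hxj : x ∈ S j),
      φ i ⟨x, hxi⟩ = φ j ⟨x, hxj⟩ := by
    intro i j x hxi hxj
    obtain rfl := hdisj i j x.1 hxi hxj
    rfl
  have hS : ∀ x : (⋃ i, V i : Set (X × X)), ∃ i, S i ∈ nhds x := by
    rintro ⟨x, hx⟩
    obtain ⟨i, hi⟩ := Set.mem_iUnion.1 hx
    exact ⟨i, ((hV i).preimage continuous_subtype_val).mem_nhds hi⟩
  refine ⟨ContinuousMap.liftCover S φ hφ hS, ?_⟩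
  rintro ⟨x, hx⟩
  obtain ⟨i, hi⟩ := Set.mem_iUnion.1 hx
  have := ContinuousMap.liftCover_coe (S := S) (φ := φ) (hφ := hφ) (hS := hS) (i := i) ⟨⟨x, hx⟩, hi⟩
  rw [this]
  exact hs i ⟨x, hi⟩

theorem ConfSpace.continuous_coord {n m : ℕ} (k : Fin n) (i : Fin m) :
    Continuous fun z : ConfSpace n m => z.1 k i :=
  (continuous_apply i).comp ((continuous_apply k).comp continuous_subtype_val)

/-- Two families of configurations are homotopic when all straight segments between them
consist of configurations. -/
theorem ConfSpace.homotopic_of_segment {Y : Type*} [TopologicalSpace Y] {n m : ℕ}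
    (f g : C(Y, ConfSpace n m))
    (h : ∀ (y : Y) (t : ℝ), 0 ≤ t → t ≤ 1 → ∀ k l : Fin n, k ≠ l →
      ∃ i, (1 - t) * (f y).1 k i + t * (g y).1 k i ≠ (1 - t) * (f y).1 l i + t * (g y).1 l i) :
    f.Homotopic g := by
  refine ⟨⟨⟨fun p => ⟨fun k i => (1 - (p.1 : ℝ)) * (f p.2).1 k i + p.1 * (g p.2).1 k i, ?_⟩, ?_⟩,
    ?_, ?_⟩⟩
  · intro k l hkl
    by_contra hne
    obtain ⟨i, hi⟩ := h p.2 p.1 p.1.2.1 p.1.2.2 k l hne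
    exact hi (congrFun hkl i)
  · refine Continuous.subtype_mk ?_ _
    refine continuous_pi fun k => continuous_pi fun i => ?_
    have h1 : Continuous fun y => (f y).1 k i :=
      (ConfSpace.continuous_coord k i).comp f.continuous
    have h2 : Continuous fun y => (g y).1 k i :=
      (ConfSpace.continuous_coord k i).comp g.continuous
    fun_prop
  · intro y
    ext k i
    simp
  · intro y
    ext k i
    simp

/-- A function separating the indices and refining the order of the values of `a`. -/
noncomputable def refinedRank {n : ℕ} (a : Fin n → ℝ) (k : Fin n) : ℝ :=
  ((n * (Finset.univ.filter fun l => a l < a k).card + k : ℕ) : ℝ)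

theorem refinedRank_lt {n : ℕ} {a : Fin n → ℝ} {k l : Fin n} (h : a k < a l) :
    refinedRank a k < refinedRank a l := by
  unfold refinedRank
  have : (Finset.univ.filter fun j => a j < a k).card
      < (Finset.univ.filter fun j => a j < a l).card := by
    apply Finset.card_lt_card
    refine Finset.ssubset_iff_subset_ne.2 ⟨fun j hj => ?_, fun he => ?_⟩
    · simp only [Finset.mem_filter, Finset.mem_univ, true_and] at hj ⊢
      exact hj.trans h
    · have : k ∈ Finset.univ.filter fun j => a j < a l := by simpa using h
      rw [← he] at this
      simp at this
  have hk := k.2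
  norm_cast
  nlinarith

theorem refinedRank_injective {n : ℕ} (a : Fin n → ℝ) : Function.Injective (refinedRank a) := by
  intro k l h
  rcases lt_trichotomy (a k) (a l) with h1 | h1 | h1
  · exact absurd h (refinedRank_lt h1).ne
  · unfold refinedRank at h
    rw [h1] at h
    norm_cast at h
    exact Fin.ext (by omega)
  · exact absurd h (refinedRank_lt h1).ne'

theorem Finset.eq_of_card_image_eq {α β γ : Type*} [Fintype α] [DecidableEq β] [DecidableEq γ]
    {f : α → β} {g : α → γ} (hfg : ∀ i j, f i = f j → g i = g j)
    (hc : (Finset.univ.image f).card = (Finset.univ.image g).card) {i j : α} (h : g i = g j) :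
    f i = f j := by
  classical
  by_contra hne
  have : Nonempty α := ⟨i⟩
  let φ : β → γ := fun b => g (Function.invFun f b)
  have hφ : ∀ k, φ (f k) = g k := fun k => hfg _ _ (Function.invFun_eq ⟨k, rfl⟩)
  have him : (Finset.univ.image f).image φ = Finset.univ.image g := by
    rw [Finset.image_image]
    exact Finset.image_congr fun k _ => hφ k
  have hinj := Finset.card_image_iff.1 ((congrArg Finset.card him).trans hc.symm)
  exact hne (hinj (by simp) (by simp) (by rw [hφ, hφ, h]))

/-- The first coordinates of all points of a pair of configurations. -/
def firstCoord {n d : ℕ} (p : ConfSpace n (d + 2) × ConfSpace n (d + 2)) (i : Bool × Fin n) : ℝ :=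
  (if i.1 then p.2 else p.1).1 i.2 0

theorem continuous_firstCoord {n d : ℕ} (i : Bool × Fin n) :
    Continuous fun p : ConfSpace n (d + 2) × ConfSpace n (d + 2) => firstCoord p i := by
  have h := ConfSpace.continuous_coord (n := n) (m := d + 2) i.2 0
  unfold firstCoord
  cases i.1
  · exact h.comp continuous_fst
  · exact h.comp continuous_snd

/-- The first coordinates, with the two configurations kept apart. -/
def coordLabel {n d : ℕ} (p : ConfSpace n (d + 2) × ConfSpace n (d + 2)) (i : Bool × Fin n) :
    Bool × ℝ :=
  (i.1, firstCoord p i)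

/-- The configurations whose first coordinates are ordered compatibly with those of `z₀`,
and whose points are separated by the remaining coordinates if the first coordinates in `z₀`
agree. -/
def compatibleConf {n d : ℕ} (z₀ : ConfSpace n (d + 2)) : Set (ConfSpace n (d + 2)) :=
  {z | ∀ k l, (z₀.1 k 0 < z₀.1 l 0 → z.1 k 0 < z.1 l 0) ∧
    (k ≠ l → z₀.1 k 0 = z₀.1 l 0 → ∃ i ≠ 0, z.1 k i ≠ z.1 l i)}

theorem isOpen_compatibleConf {n d : ℕ} (z₀ : ConfSpace n (d + 2)) :
    IsOpen (compatibleConf z₀) := by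
  have hc := ConfSpace.continuous_coord (n := n) (m := d + 2)
  unfold compatibleConf
  simp only [Set.ofPred_forall, Set.ofPred_and]
  refine isOpen_iInter_of_finite fun k => isOpen_iInter_of_finite fun l => IsOpen.inter ?_ ?_
  · exact isOpen_iInter_of_finite fun _ => isOpen_lt (hc _ _) (hc _ _)
  · refine isOpen_iInter_of_finite fun _ => isOpen_iInter_of_finite fun _ => ?_
    simp only [Set.ofPred_exists, Set.ofPred_and]
    exact isOpen_iUnion fun i => IsOpen.inter isOpen_const (isOpen_ne_fun (hc _ _) (hc _ _))

theorem self_mem_compatibleConf {n d : ℕ} (z : ConfSpace n (d + 2)) : z ∈ compatibleConf z := by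
  refine fun k l => ⟨id, fun hkl h0 => ?_⟩
  by_contra! hc
  refine hkl (z.2 (funext fun i => ?_))
  by_cases hi : i = 0
  · rw [hi, h0]
  · exact hc i hi

/-- A configuration on the line spanned by the second basis vector. -/
def lineConf (n d : ℕ) : ConfSpace n (d + 2) :=
  ⟨fun k i => if i = 1 then (k : ℝ) else 0, fun k l h => by
    have := congrFun h 1
    simpa [Fin.ext_iff] using this⟩

theorem homotopic_lineConf {Y : Type*} [TopologicalSpace Y] {n d : ℕ} (z₀ : ConfSpace n (d + 2))
    (f : C(Y, ConfSpace n (d + 2))) (hf : ∀ y, f y ∈ compatibleConf z₀) :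
    f.Homotopic (ContinuousMap.const Y (lineConf n d)) := by
  set τ := refinedRank fun k => z₀.1 k 0 with hτ
  have hτi : Function.Injective τ := refinedRank_injective _
  have hfc : ∀ k i, Continuous fun y => (f y).1 k i := fun k i =>
    (ConfSpace.continuous_coord k i).comp f.continuous
  let f₁ : C(Y, ConfSpace n (d + 2)) :=
    ⟨fun y => ⟨fun k i => if i = 0 then τ k else (f y).1 k i, fun k l h => by
      have := congrFun h 0
      simp only [if_true] at this
      exact hτi this⟩, by
      refine Continuous.subtype_mk (continuous_pi fun k => continuous_pi fun i => ?_) _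
      by_cases hi : i = 0
      · simp only [hi, if_true]; exact continuous_const
      · simp only [hi, if_false]; exact hfc k i⟩
  let f₂ : C(Y, ConfSpace n (d + 2)) := ContinuousMap.const Y
    ⟨fun k i => if i = 0 then τ k else (lineConf n d).1 k i, fun k l h => by
      have := congrFun h 0
      simp only [if_true] at this
      exact hτi this⟩
  have h₁ : f.Homotopic f₁ := by
    refine ConfSpace.homotopic_of_segment _ _ fun y t ht0 ht1 k l hkl => ?_
    have key : ∀ k l, z₀.1 k 0 < z₀.1 l 0 →
        (1 - t) * (f y).1 k 0 + t * τ k < (1 - t) * (f y).1 l 0 + t * τ l := by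
      intro k l hlt
      have h1 := (hf y k l).1 hlt
      have h2 : τ k < τ l := refinedRank_lt hlt
      rcases ht0.eq_or_lt with rfl | ht
      · simpa using h1
      · have := mul_lt_mul_of_pos_left h2 ht
        have := mul_le_mul_of_nonneg_left h1.le (sub_nonneg.2 ht1)
        linarith
    rcases lt_trichotomy (z₀.1 k 0) (z₀.1 l 0) with hlt | heq | hlt
    · exact ⟨0, by simpa [f₁] using (key k l hlt).ne⟩
    · obtain ⟨i, hi0, hi⟩ := (hf y k l).2 hkl heq
      refine ⟨i, ?_⟩
      simp only [f₁, ContinuousMap.coe_mk, hi0, if_false]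
      rw [← add_mul, ← add_mul]
      simpa using hi
    · exact ⟨0, by simpa [f₁] using (key l k hlt).ne'⟩
  have h₂ : f₁.Homotopic f₂ := by
    refine ConfSpace.homotopic_of_segment _ _ fun y t ht0 ht1 k l hkl => ⟨0, ?_⟩
    simp only [f₁, f₂, ContinuousMap.coe_mk, ContinuousMap.const_apply, if_true]
    rw [← add_mul, ← add_mul]
    simpa using hτi.ne hkl
  have h₃ : f₂.Homotopic (ContinuousMap.const Y (lineConf n d)) := by
    refine ConfSpace.homotopic_of_segment _ _ fun y t ht0 ht1 k l hkl => ⟨1, ?_⟩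
    simp only [f₂, lineConf, ContinuousMap.const_apply, if_true, one_ne_zero, if_false]
    rw [← add_mul, ← add_mul]
    simpa [Fin.ext_iff] using hkl
  exact (h₁.trans h₂).trans h₃

/-- The pairs of configurations compatible with the pair `p₀`, in which points whose first
coordinates agree in `p₀` are closer in the first coordinate than points where they differ. -/
def clusterSet {n d : ℕ} (p₀ : ConfSpace n (d + 2) × ConfSpace n (d + 2)) :
    Set (ConfSpace n (d + 2) × ConfSpace n (d + 2)) :=
  compatibleConf p₀.1 ×ˢ compatibleConf p₀.2 ∩
    {p | ∀ i j i' j' : Bool × Fin n, coordLabel p₀ i = coordLabel p₀ j → i'.1 = j'.1 →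
      firstCoord p₀ i' ≠ firstCoord p₀ j' →
      |firstCoord p i - firstCoord p j| < |firstCoord p i' - firstCoord p j'|}

theorem isOpen_clusterSet {n d : ℕ} (p₀ : ConfSpace n (d + 2) × ConfSpace n (d + 2)) :
    IsOpen (clusterSet p₀) := by
  refine ((isOpen_compatibleConf _).prod (isOpen_compatibleConf _)).inter ?_
  simp only [Set.ofPred_forall]
  iterate 7 refine isOpen_iInter_of_finite fun _ => ?_
  exact isOpen_lt (((continuous_firstCoord _).sub (continuous_firstCoord _)).abs)
    (((continuous_firstCoord _).sub (continuous_firstCoord _)).abs)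

theorem hasMotionPlanningSection_clusterSet {n d : ℕ}
    (p₀ : ConfSpace n (d + 2) × ConfSpace n (d + 2)) :
    HasMotionPlanningSection (ConfSpace n (d + 2)) (clusterSet p₀) := by
  refine HasMotionPlanningSection.of_homotopic
    (f := ⟨fun p => p.1.1, by fun_prop⟩) (g := ⟨fun p => p.1.2, by fun_prop⟩)
    (fun _ => rfl) (fun _ => rfl) ?_
  exact (homotopic_lineConf p₀.1 _ fun p => p.2.1.1).trans
    (homotopic_lineConf p₀.2 _ fun p => p.2.1.2).symm

/-- The order relation between the first coordinates in each of the two configurations. -/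
def orderPattern {n d : ℕ} (p : ConfSpace n (d + 2) × ConfSpace n (d + 2))
    (i j : Bool × Fin n) : Prop :=
  i.1 = j.1 ∧ firstCoord p i < firstCoord p j

/-- The total number of distinct first coordinates in the two configurations. -/
noncomputable def clusterCount {n d : ℕ} (p : ConfSpace n (d + 2) × ConfSpace n (d + 2)) : ℕ :=
  (Finset.univ.image (coordLabel p)).card

theorem firstCoord_lt_of_mem_clusterSet {n d : ℕ}
    {p₀ p : ConfSpace n (d + 2) × ConfSpace n (d + 2)} (hp : p ∈ clusterSet p₀)
    {i j : Bool × Fin n} (h : orderPattern p₀ i j) : firstCoord p i < firstCoord p j := by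
  obtain ⟨s, k⟩ := i
  obtain ⟨s', l⟩ := j
  obtain ⟨rfl, h⟩ := h
  cases s
  · exact (hp.1.1 k l).1 h
  · exact (hp.1.2 k l).1 h

theorem orderPattern_eq {n d : ℕ} {p₀ p₁ p : ConfSpace n (d + 2) × ConfSpace n (d + 2)}
    (h₀ : p ∈ clusterSet p₀) (h₁ : p ∈ clusterSet p₁) (hc : clusterCount p₀ = clusterCount p₁) :
    orderPattern p₀ = orderPattern p₁ := by
  have refine_or : (∀ i j, coordLabel p₀ i = coordLabel p₀ j → coordLabel p₁ i = coordLabel p₁ j) ∨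
      (∀ i j, coordLabel p₁ i = coordLabel p₁ j → coordLabel p₀ i = coordLabel p₀ j) := by
    by_contra! hcon
    obtain ⟨⟨i, j, hij, hij'⟩, i', j', hij₁, hij₁'⟩ := hcon
    have e1 := (Prod.ext_iff.1 hij).1
    have e2 := (Prod.ext_iff.1 hij₁).1
    have := h₀.2 i j i' j' hij e2 fun h => hij₁' (Prod.ext e2 h)
    have := h₁.2 i' j' i j hij₁ e1 fun h => hij' (Prod.ext e1 h)
    linarith
  have hiff : ∀ i j, coordLabel p₀ i = coordLabel p₀ j ↔ coordLabel p₁ i = coordLabel p₁ j := by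
    rcases refine_or with h | h
    · exact fun i j => ⟨h i j, fun h' => Finset.eq_of_card_image_eq h hc h'⟩
    · exact fun i j => ⟨fun h' => Finset.eq_of_card_image_eq h hc.symm h', h i j⟩
  have main : ∀ q₀ q₁ : ConfSpace n (d + 2) × ConfSpace n (d + 2), p ∈ clusterSet q₀ →
      p ∈ clusterSet q₁ → (∀ i j, coordLabel q₁ i = coordLabel q₁ j →
      coordLabel q₀ i = coordLabel q₀ j) → ∀ i j, orderPattern q₀ i j → orderPattern q₁ i j := by
    intro q₀ q₁ h₀ h₁ hq i j h
    refine ⟨h.1, ?_⟩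
    rcases lt_trichotomy (firstCoord q₁ i) (firstCoord q₁ j) with hl | he | hl
    · exact hl
    · exact absurd (Prod.ext_iff.1 (hq i j (Prod.ext h.1 he))).2 h.2.ne
    · exact absurd (firstCoord_lt_of_mem_clusterSet h₁ ⟨h.1.symm, hl⟩)
        (firstCoord_lt_of_mem_clusterSet h₀ h).not_gt
  funext i j
  exact propext ⟨main p₀ p₁ h₀ h₁ (fun i j => (hiff i j).2) i j,
    main p₁ p₀ h₁ h₀ (fun i j => (hiff i j).1) i j⟩

theorem clusterCount_le {n d : ℕ} (p : ConfSpace n (d + 2) × ConfSpace n (d + 2)) :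
    clusterCount p ≤ 2 * n := by
  refine Finset.card_image_le.trans ?_
  simp

theorem two_le_clusterCount {n d : ℕ} (hn : 0 < n)
    (p : ConfSpace n (d + 2) × ConfSpace n (d + 2)) : 2 ≤ clusterCount p := by
  have : (Finset.univ.image (coordLabel p)).image Prod.fst = Finset.univ := by
    refine Finset.eq_univ_of_forall fun s => ?_
    rw [Finset.image_image]
    exact Finset.mem_image.2 ⟨(s, ⟨0, hn⟩), Finset.mem_univ _, rfl⟩
  have h2 := congrArg Finset.card this
  have := (Finset.card_image_le (s := Finset.univ.image (coordLabel p)) (f := Prod.fst))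
  rw [h2] at this
  exact this

theorem hasTCCover_confSpace {n d : ℕ} (hn : 0 < n) :
    HasTCCover (ConfSpace n (d + 2)) (2 * n - 1) := by
  let ρ : Fin (2 * n - 1) → Type := fun c =>
    {r : Bool × Fin n → Bool × Fin n → Prop //
      ∃ p : ConfSpace n (d + 2) × ConfSpace n (d + 2), orderPattern p = r ∧ clusterCount p = c + 2}
  have hρ : ∀ c, ∀ r : ρ c, ∃ p : ConfSpace n (d + 2) × ConfSpace n (d + 2),
      orderPattern p = r.1 ∧ clusterCount p = c + 2 := fun c r => r.2
  choose b hb hbc using hρ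
  have hopen : ∀ c r, IsOpen (clusterSet (b c r)) := fun c r => isOpen_clusterSet _
  have hpat : ∀ p q : ConfSpace n (d + 2) × ConfSpace n (d + 2), orderPattern p = orderPattern q →
      p ∈ clusterSet q := by
    intro p q h
    have hlt : ∀ i j, orderPattern p i j ↔ orderPattern q i j := fun i j => by rw [h]
    have heq : ∀ i j, i.1 = j.1 → firstCoord q i = firstCoord q j →
        firstCoord p i = firstCoord p j := by
      intro i j hij he
      refine le_antisymm (not_lt.1 fun hl => ?_) (not_lt.1 fun hl => ?_)
      · exact ((hlt j i).1 ⟨hij.symm, hl⟩).2.ne' he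
      · exact ((hlt i j).1 ⟨hij, hl⟩).2.ne he
    refine ⟨⟨fun k l => ⟨fun hl => ?_, fun hkl he => ?_⟩, fun k l => ⟨fun hl => ?_,
      fun hkl he => ?_⟩⟩, fun i j i' j' hij h1 h2 => ?_⟩
    · exact ((hlt (false, k) (false, l)).2 ⟨rfl, hl⟩).2
    · exact (self_mem_compatibleConf p.1 k l).2 hkl (heq (false, k) (false, l) rfl he)
    · exact ((hlt (true, k) (true, l)).2 ⟨rfl, hl⟩).2
    · exact (self_mem_compatibleConf p.2 k l).2 hkl (heq (true, k) (true, l) rfl he)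
    · rw [heq i j (Prod.ext_iff.1 hij).1 (Prod.ext_iff.1 hij).2, sub_self, abs_zero]
      refine abs_pos.2 (sub_ne_zero.2 fun he => ?_)
      rcases h2.lt_or_gt with hl | hl
      · exact ((hlt i' j').2 ⟨h1, hl⟩).2.ne he
      · exact ((hlt j' i').2 ⟨h1.symm, hl⟩).2.ne' he
  refine ⟨fun c => ⋃ r, clusterSet (b c r), fun c => isOpen_iUnion (hopen c), ?_, fun c => ?_⟩
  · refine Set.eq_univ_of_forall fun p => ?_
    have h1 := clusterCount_le p
    have h2 := two_le_clusterCount hn p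
    let c : Fin (2 * n - 1) := ⟨clusterCount p - 2, by omega⟩
    let r : ρ c := ⟨orderPattern p, p, rfl, by simp only [c]; omega⟩
    exact Set.mem_iUnion.2 ⟨c, Set.mem_iUnion.2 ⟨r, hpat _ _ (hb c r).symm⟩⟩
  · refine HasMotionPlanningSection.iUnion (hopen c) (fun r r' p h h' => Subtype.ext ?_)
      fun r => hasMotionPlanningSection_clusterSet _
    rw [← hb c r, ← hb c r']
    exact orderPattern_eq h h' ((hbc c r).trans (hbc c r').symm)

end UpperBound

section DiscreteForms

set_option linter.unusedSectionVars false

/-- Operators on functions with values in the exterior algebra. Discrete differential forms on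
the abelian group `V` are realised as such operators. -/
abbrev FormOp (ι V : Type*) := Module.End ℝ (V → ExteriorAlgebra ℝ (ι → ℝ))

/-- `x` commutes with `a` up to the scalar `s`. -/
def SkewCommute {A : Type*} [Ring A] [Algebra ℝ A] (a : A) (s : ℝ) (x : A) : Prop :=
  x * a = s • (a * x)

namespace SkewCommute

variable {A : Type*} [Ring A] [Algebra ℝ A] {a x y : A} {s t : ℝ}

theorem mul (hx : SkewCommute a s x) (hy : SkewCommute a t y) : SkewCommute a (s * t) (x * y) := by
  unfold SkewCommute at *
  rw [mul_assoc, hy, mul_smul_comm, ← mul_assoc, hx, smul_mul_assoc, smul_smul, mul_assoc,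
    mul_comm t s]

theorem list_prod {l : List A} (h : ∀ x ∈ l, SkewCommute a s x) :
    SkewCommute a (s ^ l.length) l.prod := by
  induction l with
  | nil => simp [SkewCommute]
  | cons x l ih =>
    rw [List.prod_cons, List.length_cons, pow_succ']
    exact (h x (by simp)).mul (ih fun y hy => h y (by simp [hy]))

theorem sub (hx : SkewCommute a s x) (hy : SkewCommute a s y) : SkewCommute a s (x - y) := by
  unfold SkewCommute at *
  rw [sub_mul, hx, hy, mul_sub, smul_sub]

theorem add (hx : SkewCommute a s x) (hy : SkewCommute a s y) : SkewCommute a s (x + y) := by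
  unfold SkewCommute at *
  rw [add_mul, hx, hy, mul_add, smul_add]

theorem smul (c : ℝ) (hx : SkewCommute a s x) : SkewCommute a s (c • x) := by
  unfold SkewCommute at *
  rw [smul_mul_assoc, hx, mul_smul_comm, smul_comm]

theorem sum {κ : Type*} {S : Finset κ} {f : κ → A} (h : ∀ k ∈ S, SkewCommute a s (f k)) :
    SkewCommute a s (∑ k ∈ S, f k) := by
  classical
  induction S using Finset.induction_on with
  | empty => simp [SkewCommute]
  | insert k S hk ih =>
    rw [Finset.sum_insert hk]
    exact (h k (by simp)).add (ih fun j hj => h j (by simp [hj]))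

end SkewCommute

namespace FormOp

variable {ι V Y : Type*}

/-- Multiplication by a scalar function. -/
def fn (f : V → ℝ) : FormOp ι V where
  toFun φ v := f v • φ v
  map_add' φ ψ := by ext v; simp
  map_smul' c φ := by ext v; exact smul_comm (f v) c (φ v)

@[simp] theorem fn_apply (f : V → ℝ) (φ : V → ExteriorAlgebra ℝ (ι → ℝ)) (v : V) :
    (fn f : FormOp ι V) φ v = f v • φ v := rfl

theorem fn_mul_fn (f g : V → ℝ) : (fn f * fn g : FormOp ι V) = fn (f * g) := by
  ext φ v
  simp [mul_smul]

theorem fn_sub (f g : V → ℝ) : (fn (f - g) : FormOp ι V) = fn f - fn g := by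
  ext φ v
  simp [sub_smul]

/-- Pointwise multiplication by a constant form from the left. -/
def lmul (a : ExteriorAlgebra ℝ (ι → ℝ)) : FormOp ι V where
  toFun φ v := a * φ v
  map_add' φ ψ := by ext v; simp [mul_add]
  map_smul' c φ := by ext v; simp

/-- Pointwise multiplication by a constant form from the right. -/
def rmul (a : ExteriorAlgebra ℝ (ι → ℝ)) : FormOp ι V where
  toFun φ v := φ v * a
  map_add' φ ψ := by ext v; simp [add_mul]
  map_smul' c φ := by ext v; simp

@[simp] theorem lmul_apply (a : ExteriorAlgebra ℝ (ι → ℝ)) (φ : V → ExteriorAlgebra ℝ (ι → ℝ))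
    (v : V) : (lmul a : FormOp ι V) φ v = a * φ v := rfl

@[simp] theorem rmul_apply (a : ExteriorAlgebra ℝ (ι → ℝ)) (φ : V → ExteriorAlgebra ℝ (ι → ℝ))
    (v : V) : (rmul a : FormOp ι V) φ v = φ v * a := rfl

variable [Fintype ι] [DecidableEq ι]

/-- The generator of the exterior algebra in direction `i`. -/
noncomputable def covec (i : ι) : ExteriorAlgebra ℝ (ι → ℝ) :=
  ExteriorAlgebra.ι ℝ (Pi.single i 1)

theorem covec_mul_covec (i j : ι) : covec i * covec j = -(covec j * covec i) :=
  eq_neg_of_add_eq_zero_left (ExteriorAlgebra.ι_add_mul_swap _ _)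

/-- The sum of all generators of the exterior algebra. -/
noncomputable def covecSum (ι : Type*) [Fintype ι] [DecidableEq ι] : ExteriorAlgebra ℝ (ι → ℝ) :=
  ∑ i, covec i

/-- `x` is a form of parity `s = ±1`. -/
structure HasParity (s : ℝ) (x : FormOp ι V) : Prop where
  left : SkewCommute (lmul (covecSum ι)) s x
  right : SkewCommute (rmul (covecSum ι)) 1 x

namespace HasParity

variable {s t : ℝ} {x z : FormOp ι V}

theorem mul (hx : HasParity s x) (hz : HasParity t z) : HasParity (s * t) (x * z) :=
  ⟨hx.left.mul hz.left, by simpa using hx.right.mul hz.right⟩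

theorem list_prod {l : List (FormOp ι V)} (h : ∀ x ∈ l, HasParity s x) :
    HasParity (s ^ l.length) l.prod :=
  ⟨SkewCommute.list_prod fun x hx => (h x hx).left, by
    simpa using SkewCommute.list_prod fun x hx => (h x hx).right⟩

theorem sub (hx : HasParity s x) (hz : HasParity s z) : HasParity s (x - z) :=
  ⟨hx.left.sub hz.left, hx.right.sub hz.right⟩

theorem add (hx : HasParity s x) (hz : HasParity s z) : HasParity s (x + z) :=
  ⟨hx.left.add hz.left, hx.right.add hz.right⟩

theorem smul (c : ℝ) (hx : HasParity s x) : HasParity s (c • x) :=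
  ⟨hx.left.smul c, hx.right.smul c⟩

theorem fn (f : V → ℝ) : HasParity 1 (fn f : FormOp ι V) := by
  constructor <;>
  · ext φ v
    simp only [Module.End.mul_apply, fn_apply, lmul_apply, rmul_apply, one_smul,
      mul_smul_comm, smul_mul_assoc]

end HasParity

variable [AddCommGroup V] (e : ι → V)

/-- Shift in direction `i` followed by exterior multiplication by the `i`-th generator. -/
noncomputable def theta (i : ι) : FormOp ι V where
  toFun φ v := covec i * φ (v + e i)
  map_add' φ ψ := by ext v; simp [mul_add]
  map_smul' c φ := by ext v; simp

@[simp] theorem theta_apply (i : ι) (φ : V → ExteriorAlgebra ℝ (ι → ℝ)) (v : V) :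
    theta e i φ v = covec i * φ (v + e i) := rfl

theorem theta_mul_theta (i j : ι) : theta e i * theta e j = -(theta e j * theta e i) := by
  ext φ v
  simp only [Module.End.mul_apply, theta_apply, LinearMap.neg_apply, Pi.neg_apply]
  rw [← mul_assoc, covec_mul_covec, ← mul_assoc, neg_mul, add_right_comm]

theorem theta_mul_fn (i : ι) (f : V → ℝ) :
    theta e i * fn f = fn (fun v => f (v + e i)) * theta e i := by
  ext φ v
  simp

theorem hasParity_theta (i : ι) : HasParity (-1) (theta e i) := by
  constructor
  · ext φ v
    have h : covec i * covecSum ι = -(covecSum ι * covec i) := by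
      simp only [covecSum, Finset.mul_sum, Finset.sum_mul, ← Finset.sum_neg_distrib]
      exact Finset.sum_congr rfl fun j _ => covec_mul_covec i j
    simp only [Module.End.mul_apply, theta_apply, lmul_apply, LinearMap.smul_apply, Pi.smul_apply]
    rw [← mul_assoc, h, neg_mul, mul_assoc, neg_one_smul]
  · ext φ v
    simp [mul_assoc]

/-- The odd form whose graded commutator is the differential. -/
noncomputable def thetaSum : FormOp ι V := ∑ i, theta e i

theorem hasParity_thetaSum : HasParity (-1) (thetaSum e) :=
  ⟨SkewCommute.sum fun i _ => (hasParity_theta e i).left,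
    SkewCommute.sum fun i _ => (hasParity_theta e i).right⟩

theorem thetaSum_mul_self : thetaSum e * thetaSum e = 0 := by
  have h : thetaSum e * thetaSum e = -(thetaSum e * thetaSum e) := by
    conv_lhs => simp only [thetaSum, Finset.mul_sum, Finset.sum_mul]
    simp only [thetaSum, Finset.mul_sum, Finset.sum_mul, ← Finset.sum_neg_distrib]
    rw [Finset.sum_comm]
    exact Finset.sum_congr rfl fun i _ => Finset.sum_congr rfl fun j _ => theta_mul_theta e _ _
  have h2 : (2 : ℝ) • (thetaSum e * thetaSum e) = 0 := by
    rw [two_smul]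
    exact add_eq_zero_iff_eq_neg.2 h
  exact (smul_eq_zero.1 h2).resolve_left two_ne_zero

/-- The differential of a function. -/
noncomputable def dfn (f : V → ℝ) : FormOp ι V := thetaSum e * fn f - fn f * thetaSum e

theorem dfn_eq_sum (f : V → ℝ) :
    dfn e f = ∑ i, fn (fun v => f (v + e i) - f v) * theta e i := by
  simp only [dfn, thetaSum, Finset.sum_mul, Finset.mul_sum, ← Finset.sum_sub_distrib]
  refine Finset.sum_congr rfl fun i _ => ?_
  rw [theta_mul_fn, ← sub_mul, ← fn_sub]
  rfl

theorem dfn_sub (f g : V → ℝ) : dfn e (f - g) = dfn e f - dfn e g := by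
  simp only [dfn, fn_sub, mul_sub, sub_mul]
  abel

theorem hasParity_dfn (f : V → ℝ) : HasParity (-1) (dfn e f) := by
  have h1 := (hasParity_thetaSum e).mul (HasParity.fn f)
  have h2 := (HasParity.fn (ι := ι) f).mul (hasParity_thetaSum e)
  rw [mul_one] at h1
  rw [one_mul] at h2
  exact h1.sub h2

theorem skewCommute_dfn (f : V → ℝ) : SkewCommute (thetaSum e) (-1) (dfn e f) := by
  unfold SkewCommute dfn
  have h := thetaSum_mul_self e
  rw [sub_mul, mul_sub, mul_assoc (fn f), h, ← mul_assoc (thetaSum e) (thetaSum e), h,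
    ← mul_assoc]
  simp

/-- `x` is the differential of an odd form. -/
def IsExact (x : FormOp ι V) : Prop :=
  ∃ η : FormOp ι V, HasParity (-1) η ∧ x = thetaSum e * η + η * thetaSum e

/-- `x` is an even form with vanishing differential. -/
structure IsClosedEven (x : FormOp ι V) : Prop where
  parity : HasParity 1 x
  comm : Commute x (thetaSum e)

variable {e}

namespace IsClosedEven

variable {x z : FormOp ι V}

theorem mul (hx : IsClosedEven e x) (hz : IsClosedEven e z) : IsClosedEven e (x * z) :=
  ⟨by simpa using hx.parity.mul hz.parity, hx.comm.mul_left hz.comm⟩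

theorem sub (hx : IsClosedEven e x) (hz : IsClosedEven e z) : IsClosedEven e (x - z) :=
  ⟨hx.parity.sub hz.parity, hx.comm.sub_left hz.comm⟩

theorem list_prod {l : List (FormOp ι V)} (h : ∀ x ∈ l, IsClosedEven e x) :
    IsClosedEven e l.prod := by
  induction l with
  | nil => exact ⟨by constructor <;> simp [SkewCommute], Commute.one_left _⟩
  | cons x l ih =>
    rw [List.prod_cons]
    exact (h x (by simp)).mul (ih fun y hy => h y (by simp [hy]))

end IsClosedEven

namespace IsExact

variable {x z : FormOp ι V}

theorem zero : IsExact e (0 : FormOp ι V) :=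
  ⟨0, by constructor <;> simp [SkewCommute], by simp⟩

theorem add (hx : IsExact e x) (hz : IsExact e z) : IsExact e (x + z) := by
  obtain ⟨η, hη, rfl⟩ := hx
  obtain ⟨ζ, hζ, rfl⟩ := hz
  exact ⟨η + ζ, hη.add hζ, by rw [mul_add, add_mul]; abel⟩

theorem closed_mul (hx : IsClosedEven e x) (hz : IsExact e z) : IsExact e (x * z) := by
  obtain ⟨η, hη, rfl⟩ := hz
  refine ⟨x * η, by simpa using hx.parity.mul hη, ?_⟩
  rw [mul_add, ← mul_assoc, hx.comm.eq, mul_assoc, mul_assoc]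

theorem mul_closed (hx : IsExact e x) (hz : IsClosedEven e z) : IsExact e (x * z) := by
  obtain ⟨η, hη, rfl⟩ := hx
  refine ⟨η * z, by simpa using hη.mul hz.parity, ?_⟩
  rw [add_mul, mul_assoc, mul_assoc, ← hz.comm.eq, mul_assoc]

theorem list_prod_sub {κ : Type*} {l : List κ} {a b : κ → FormOp ι V}
    (ha : ∀ k ∈ l, IsClosedEven e (a k)) (hb : ∀ k ∈ l, IsClosedEven e (b k))
    (hab : ∀ k ∈ l, IsExact e (a k - b k)) : IsExact e ((l.map a).prod - (l.map b).prod) := by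
  induction l with
  | nil => simpa using zero
  | cons k l ih =>
    simp only [List.map_cons, List.prod_cons]
    have h1 : IsExact e ((a k - b k) * (l.map a).prod) :=
      (hab k (by simp)).mul_closed <| IsClosedEven.list_prod <| by
        intro x hx
        obtain ⟨j, hj, rfl⟩ := List.mem_map.1 hx
        exact ha j (by simp [hj])
    have h2 : IsExact e (b k * ((l.map a).prod - (l.map b).prod)) :=
      closed_mul (hb k (by simp)) <| ih (fun j hj => ha j (by simp [hj]))
        (fun j hj => hb j (by simp [hj])) fun j hj => hab j (by simp [hj])
    convert h1.add h2 using 1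
    rw [sub_mul, mul_sub]
    abel

/-- The discrete Stokes theorem. -/
theorem sum_apply_one [Fintype V] (hx : IsExact e x) : ∑ v, x 1 v = 0 := by
  obtain ⟨η, hη, rfl⟩ := hx
  have hΘ : thetaSum e 1 = rmul (covecSum ι) (1 : V → ExteriorAlgebra ℝ (ι → ℝ)) := by
    ext v
    simp [thetaSum, covecSum, LinearMap.sum_apply, Finset.sum_apply]
  have hlr : lmul (covecSum ι) (1 : V → ExteriorAlgebra ℝ (ι → ℝ)) = rmul (covecSum ι) 1 := by
    ext v
    simp
  have h1 : ∀ v, (η * thetaSum e) 1 v = -(covecSum ι * η 1 v) := by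
    intro v
    rw [Module.End.mul_apply, hΘ, ← hlr, ← Module.End.mul_apply, hη.left]
    simp
  have h2 : ∑ v, (thetaSum e * η) 1 v = ∑ v, covecSum ι * η 1 v := by
    simp only [Module.End.mul_apply, thetaSum, LinearMap.sum_apply, Finset.sum_apply, theta_apply,
      covecSum, Finset.sum_mul]
    rw [Finset.sum_comm]
    conv_rhs => rw [Finset.sum_comm]
    refine Finset.sum_congr rfl fun i _ => ?_
    exact Equiv.sum_comp (Equiv.addRight (e i)) fun v => covec i * η 1 v
  simp only [LinearMap.add_apply, Pi.add_apply, Finset.sum_add_distrib, h1, h2]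
  simp

end IsExact

/-- `x` vanishes at the point `v`. -/
def IsNull (x : FormOp ι V) (v : V) : Prop := ∀ φ, x φ v = 0

theorem eq_zero_of_isNull {x : FormOp ι V} (h : ∀ v, IsNull x v) : x = 0 := by
  ext φ v
  exact h v φ

theorem isNull_fn {f : V → ℝ} {v : V} (h : f v = 0) : IsNull (fn f : FormOp ι V) v := by
  intro φ
  simp [h]

theorem isNull_dfn {f : V → ℝ} {v : V} (h : ∀ i, f (v + e i) = f v) : IsNull (dfn e f) v := by
  intro φ
  simp [dfn_eq_sum, LinearMap.sum_apply, Finset.sum_apply, h]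

variable [PseudoMetricSpace Y] (y : V → Y)

/-- `x φ v` depends on `φ` only near `v`, distances being measured through `y`. -/
def IsLocal (r : ℝ) (x : FormOp ι V) : Prop :=
  ∀ φ v, (∀ u, dist (y u) (y v) ≤ r → φ u = 0) → x φ v = 0

variable {y} {r : ℝ}

theorem isLocal_fn (hr : 0 ≤ r) (f : V → ℝ) : IsLocal y r (fn f : FormOp ι V) := by
  intro φ v h
  simp [h v (by simpa using hr)]

theorem isLocal_dfn (he : ∀ v i, dist (y (v + e i)) (y v) ≤ r) (f : V → ℝ) :
    IsLocal y r (dfn e f) := by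
  intro φ v h
  simp only [dfn_eq_sum, LinearMap.sum_apply, Finset.sum_apply, Module.End.mul_apply, fn_apply,
    theta_apply]
  exact Finset.sum_eq_zero fun i _ => by rw [h _ (he v i), mul_zero, smul_zero]

namespace IsLocal

variable {x z : FormOp ι V} {t : ℝ}

theorem mul (hx : IsLocal y r x) (hz : IsLocal y t z) : IsLocal y (r + t) (x * z) := by
  intro φ v h
  refine hx _ v fun u hu => hz φ u fun w hw => h w ?_
  linarith [dist_triangle (y w) (y u) (y v)]

theorem sub (hx : IsLocal y r x) (hz : IsLocal y r z) : IsLocal y r (x - z) := by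
  intro φ v h
  simp [hx φ v h, hz φ v h]

theorem list_prod {l : List (FormOp ι V)} (h : ∀ x ∈ l, IsLocal y r x) :
    IsLocal y (l.length * r) l.prod := by
  induction l with
  | nil =>
    intro φ v hφ
    simpa using hφ v (by simp)
  | cons x l ih =>
    rw [List.prod_cons, List.length_cons]
    convert (h x (by simp)).mul (ih fun y hy => h y (by simp [hy])) using 1
    push_cast
    ring

end IsLocal

theorem isNull_list_prod (hr : 0 ≤ r) {l : List (FormOp ι V)} (hl : ∀ x ∈ l, IsLocal y r x)
    {v : V} (h : ∃ x ∈ l, ∀ u, dist (y u) (y v) ≤ l.length * r → IsNull x u) :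
    IsNull l.prod v := by
  induction l generalizing v with
  | nil => obtain ⟨x, hx, -⟩ := h; simp at hx
  | cons a l ih =>
    obtain ⟨x, hx, hxu⟩ := h
    intro φ
    rw [List.prod_cons, Module.End.mul_apply]
    rcases List.mem_cons.1 hx with rfl | hx
    · exact hxu v (by rw [dist_self]; positivity) _
    · refine hl a (by simp) _ v fun u hu => ?_
      refine ih (fun x hx => hl x (by simp [hx])) ⟨x, hx, fun w hw => hxu w ?_⟩ φ
      rw [List.length_cons]
      push_cast
      linarith [dist_triangle (y w) (y u) (y v)]

end FormOp

end DiscreteForms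

section Cochains

set_option linter.unusedSectionVars false

theorem SkewCommute.bracket_eq {R : Type*} [Ring R] [Algebra ℝ R] {Θ A g B χ : R} {s : ℝ}
    (hs : s * s = 1) (hA : SkewCommute Θ s A) (hB : SkewCommute Θ (-s) B)
    (h : A * g * B * (Θ * χ - χ * Θ) = 0) :
    A * (Θ * g - g * Θ) * B * χ = Θ * (s • (A * g * B * χ)) + s • (A * g * B * χ) * Θ := by
  have hB' : Θ * B = -(s • (B * Θ)) := by
    rw [hB, smul_smul, mul_neg, hs, neg_smul, one_smul, neg_neg]
  have hA' : s • (Θ * A) = A * Θ := hA.symm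
  have h1 : Θ * (s • (A * g * B * χ)) = A * Θ * g * B * χ := by
    rw [mul_smul_comm, ← hA']
    simp only [smul_mul_assoc, mul_assoc]
  have h2 : A * g * Θ * B * χ = -(s • (A * g * B * χ) * Θ) := by
    rw [mul_assoc _ Θ B, hB', mul_neg, mul_smul_comm, neg_mul, smul_mul_assoc, smul_mul_assoc,
      ← mul_assoc, mul_assoc _ Θ χ, mul_assoc _ χ Θ, ← sub_eq_zero.1 ((mul_sub _ _ _).symm.trans h)]
  rw [h1, mul_sub, sub_mul, sub_mul, ← mul_assoc, ← mul_assoc, h2, sub_neg_eq_add]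

namespace FormOp

variable {ι V Y : Type*} [Fintype ι] [DecidableEq ι] [AddCommGroup V] {e : ι → V}

/-- The form `df₁ ⋯ df_d · χ`. -/
noncomputable def cochain (e : ι → V) (l : List (V → ℝ)) (χ : V → ℝ) : FormOp ι V :=
  (l.map (dfn e)).prod * fn χ

variable [PseudoMetricSpace Y] {y : V → Y} {r κ : ℝ}

/-- The function `f` is equal to `c` on the ball of radius `r` around `v`. -/
def EqNear (y : V → Y) (r : ℝ) (f : V → ℝ) (v : V) (c : ℝ) : Prop :=
  ∀ u, dist (y u) (y v) ≤ r → f u = c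

theorem EqNear.isNull_dfn {f : V → ℝ} {v u : V} {c s : ℝ} (h : EqNear y r f v c)
    (he : ∀ v i, dist (y (v + e i)) (y v) ≤ κ) (hκ : 0 ≤ κ) (hr : s + κ ≤ r)
    (hu : dist (y u) (y v) ≤ s) : IsNull (dfn e f) u := by
  refine FormOp.isNull_dfn fun i => ?_
  rw [h u (by linarith), h (u + e i) ?_]
  linarith [dist_triangle (y (u + e i)) (y u) (y v), he u i]

theorem EqNear.isNull_fn_sub {f g : V → ℝ} {v u : V} {c s : ℝ} (hf : EqNear y r f v c)
    (hg : EqNear y r g v c) (hr : s ≤ r) (hu : dist (y u) (y v) ≤ s) :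
    IsNull (fn (f - g) : FormOp ι V) u := by
  refine FormOp.isNull_fn ?_
  rw [Pi.sub_apply, hf u (hu.trans hr), hg u (hu.trans hr), sub_self]

theorem skewCommute_thetaSum_prod_dfn (l : List (V → ℝ)) :
    SkewCommute (thetaSum e) ((-1) ^ l.length) (l.map (dfn e)).prod := by
  have h := SkewCommute.list_prod (a := thetaSum e) (s := -1) (l := l.map (dfn e)) <| by
    intro x hx
    obtain ⟨f, -, rfl⟩ := List.mem_map.1 hx
    exact skewCommute_dfn e f
  rwa [List.length_map] at h

theorem hasParity_prod_dfn (l : List (V → ℝ)) :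
    HasParity ((-1) ^ l.length) (l.map (dfn e)).prod := by
  have h := HasParity.list_prod (s := -1) (l := l.map (dfn e)) <| by
    intro x hx
    obtain ⟨f, -, rfl⟩ := List.mem_map.1 hx
    exact hasParity_dfn e f
  rwa [List.length_map] at h

theorem prod_dfn_eq_zero (he : ∀ v i, dist (y (v + e i)) (y v) ≤ κ) (hκ : 0 ≤ κ)
    {l : List (V → ℝ)} (hr : (l.length + 1 : ℝ) * κ ≤ r)
    (h : ∀ v, ∃ f ∈ l, ∃ c, EqNear y r f v c) : (l.map (dfn e)).prod = 0 := by
  refine eq_zero_of_isNull fun v => ?_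
  refine isNull_list_prod (y := y) hκ ?_ ?_
  · intro x hx
    obtain ⟨f, -, rfl⟩ := List.mem_map.1 hx
    exact isLocal_dfn he f
  · obtain ⟨f, hf, c, hc⟩ := h v
    refine ⟨dfn e f, List.mem_map_of_mem hf, fun u hu => ?_⟩
    exact hc.isNull_dfn he hκ (s := l.length * κ) (by linarith) (by simpa using hu)

theorem isClosedEven_cochain (he : ∀ v i, dist (y (v + e i)) (y v) ≤ κ) (hκ : 0 ≤ κ)
    {l : List (V → ℝ)} {χ : V → ℝ} (hl : Even l.length) (hr : (l.length + 2 : ℝ) * κ ≤ r)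
    (h : ∀ v, ∃ f ∈ l ++ [χ], ∃ c, EqNear y r f v c) : IsClosedEven e (cochain e l χ) := by
  have h1 := hasParity_prod_dfn (e := e) l
  have h2 := skewCommute_thetaSum_prod_dfn (e := e) l
  rw [hl.neg_one_pow] at h1 h2
  refine ⟨by simpa [cochain] using h1.mul (HasParity.fn χ), ?_⟩
  have h3 := prod_dfn_eq_zero he hκ (l := l ++ [χ]) (r := r)
    (by rw [List.length_append]; push_cast; simpa [add_assoc, one_add_one_eq_two] using hr) h
  rw [List.map_append, List.prod_append, List.map_singleton, List.prod_singleton, dfn, mul_sub,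
    sub_eq_zero] at h3
  rw [SkewCommute, one_smul] at h2
  rw [Commute, SemiconjBy, cochain, mul_assoc, ← h3, ← mul_assoc, h2, mul_assoc]

theorem isExact_cochain_sub_of_single (he : ∀ v i, dist (y (v + e i)) (y v) ≤ κ) (hκ : 0 ≤ κ)
    {l₁ l₂ : List (V → ℝ)} {f g χ : V → ℝ} (hl : Even (l₁.length + l₂.length + 1))
    (hr : (l₁.length + l₂.length + 3 : ℝ) * κ ≤ r)
    (h : ∀ v, (∃ q ∈ l₁ ++ l₂ ++ [χ], ∃ c, EqNear y r q v c) ∨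
      ∃ c, EqNear y r f v c ∧ EqNear y r g v c) :
    IsExact e (cochain e (l₁ ++ f :: l₂) χ - cochain e (l₁ ++ g :: l₂) χ) := by
  set A := (l₁.map (dfn e)).prod with hA
  set B := (l₂.map (dfn e)).prod with hB
  have hdiff : cochain e (l₁ ++ f :: l₂) χ - cochain e (l₁ ++ g :: l₂) χ =
      A * dfn e (f - g) * B * fn χ := by
    simp only [cochain, List.map_append, List.map_cons, List.prod_append, List.prod_cons, dfn_sub]
    simp only [← hA, ← hB, mul_sub, sub_mul, mul_assoc]
  have hzero : A * fn (f - g) * B * dfn e χ = 0 := by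
    have hlist : A * fn (f - g) * B * dfn e χ =
        (l₁.map (dfn e) ++ fn (f - g) :: (l₂.map (dfn e) ++ [dfn e χ])).prod := by
      simp [hA, hB, mul_assoc]
    rw [hlist]
    refine eq_zero_of_isNull fun v => isNull_list_prod (y := y) hκ ?_ ?_
    · intro x hx
      simp only [List.mem_append, List.mem_map, List.mem_cons, List.not_mem_nil,
        or_false] at hx
      obtain ⟨q, -, rfl⟩ | rfl | ⟨q, -, rfl⟩ | rfl := hx
      · exact isLocal_dfn he q
      · exact isLocal_fn hκ _
      · exact isLocal_dfn he q
      · exact isLocal_dfn he χ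
    · have hlen : ((l₁.map (dfn e) ++ fn (f - g) :: (l₂.map (dfn e) ++ [dfn e χ])).length : ℝ)
          * κ + κ ≤ r := by
        refine le_trans (le_of_eq ?_) hr
        simp
        ring
      rcases h v with ⟨q, hq, c, hc⟩ | ⟨c, hf, hg⟩
      · refine ⟨dfn e q, ?_, fun u hu => hc.isNull_dfn he hκ hlen hu⟩
        simp only [List.mem_append, List.mem_singleton] at hq
        simp only [List.mem_append, List.mem_cons, List.mem_map]
        rcases hq with (hq | hq) | rfl
        · exact Or.inl ⟨q, hq, rfl⟩
        · exact Or.inr (Or.inr (Or.inl ⟨q, hq, rfl⟩))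
        · simp
      · exact ⟨fn (f - g), by simp, fun u hu => hf.isNull_fn_sub hg (by linarith) hu⟩
  have hs : ((-1 : ℝ) ^ l₁.length) * (-1) ^ l₁.length = 1 := by
    rw [← mul_pow]; simp
  have hst : ((-1 : ℝ) ^ l₂.length) = -(-1) ^ l₁.length := by
    have h1 := hl.neg_one_pow (α := ℝ)
    rw [pow_succ, pow_add] at h1
    have h2 : ((-1 : ℝ) ^ l₁.length) * ((-1 : ℝ) ^ l₁.length * (-1) ^ l₂.length) =
      (-1) ^ l₂.length := by rw [← mul_assoc, hs, one_mul]
    rw [← h2]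
    linear_combination (-((-1 : ℝ) ^ l₁.length)) * h1
  have hAΘ : SkewCommute (thetaSum e) ((-1) ^ l₁.length) A := skewCommute_thetaSum_prod_dfn l₁
  have hBΘ : SkewCommute (thetaSum e) ((-1) ^ l₂.length) B := skewCommute_thetaSum_prod_dfn l₂
  rw [hst] at hBΘ
  have hpar : HasParity (-1) (A * fn (f - g) * B * fn χ) := by
    have h1 := (((hasParity_prod_dfn (e := e) l₁).mul (HasParity.fn (f - g))).mul
      (hasParity_prod_dfn (e := e) l₂)).mul (HasParity.fn χ)
    have h2 : ((-1 : ℝ) ^ l₁.length * 1 * (-1) ^ l₂.length * 1) = -1 := by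
      rw [hst]
      linear_combination -hs
    rwa [h2] at h1
  rw [hdiff]
  exact ⟨_, hpar.smul _, hAΘ.bracket_eq hs hBΘ hzero⟩

theorem isExact_cochain_sub_of_list (he : ∀ v i, dist (y (v + e i)) (y v) ≤ κ) (hκ : 0 ≤ κ)
    {χ : V → ℝ} (ps qs : List ((V → ℝ) × (V → ℝ))) (hl : Even (qs.length + ps.length))
    (hr : (qs.length + ps.length + 2 : ℝ) * κ ≤ r)
    (h : ∀ v, ∃ p ∈ qs ++ ps ++ [(χ, χ)], ∃ c, EqNear y r p.1 v c ∧ EqNear y r p.2 v c) :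
    IsExact e (cochain e (qs.map Prod.snd ++ ps.map Prod.fst) χ -
      cochain e (qs.map Prod.snd ++ ps.map Prod.snd) χ) := by
  induction ps generalizing qs with
  | nil => simpa using IsExact.zero
  | cons p ps ih =>
    have h1 := ih (qs ++ [p])
      (by rwa [List.length_append, List.length_singleton, add_assoc, add_comm 1, ← List.length_cons (a := p)])
      (by
        rw [List.length_append]
        refine le_trans (le_of_eq ?_) hr
        push_cast [List.length_cons, List.length_nil]
        ring)
      (by simpa using h)
    have h2 : IsExact e (cochain e (qs.map Prod.snd ++ p.1 :: ps.map Prod.fst) χ -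
        cochain e (qs.map Prod.snd ++ p.2 :: ps.map Prod.fst) χ) := by
      refine isExact_cochain_sub_of_single he hκ (r := r) ?_ ?_ ?_
      · simpa [add_assoc] using hl
      · refine le_trans (le_of_eq ?_) hr
        simp only [List.length_map, List.length_cons]
        push_cast
        ring
      · intro v
        obtain ⟨q, hq, c, hc1, hc2⟩ := h v
        simp only [List.mem_append, List.mem_cons, List.not_mem_nil, or_false] at hq
        rcases hq with (hq | rfl | hq) | rfl
        · refine Or.inl ⟨q.2, ?_, c, hc2⟩
          simp only [List.mem_append]
          exact Or.inl (Or.inl (List.mem_map_of_mem hq))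
        · exact Or.inr ⟨c, hc1, hc2⟩
        · refine Or.inl ⟨q.1, ?_, c, hc1⟩
          simp only [List.mem_append]
          exact Or.inl (Or.inr (List.mem_map_of_mem hq))
        · exact Or.inl ⟨χ, by simp, c, hc1⟩
    have h3 := h2.add h1
    simpa using h3

theorem isExact_cochain_sub (he : ∀ v i, dist (y (v + e i)) (y v) ≤ κ) (hκ : 0 ≤ κ)
    {χ χ' : V → ℝ} {ps : List ((V → ℝ) × (V → ℝ))} (hl : Even ps.length)
    (hr : (ps.length + 2 : ℝ) * κ ≤ r)
    (h : ∀ v, ∃ p ∈ ps ++ [(χ, χ')], ∃ c, EqNear y r p.1 v c ∧ EqNear y r p.2 v c) :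
    IsExact e (cochain e (ps.map Prod.fst) χ - cochain e (ps.map Prod.snd) χ') := by
  have h1 : IsExact e (cochain e (ps.map Prod.fst) χ - cochain e (ps.map Prod.snd) χ) := by
    have := isExact_cochain_sub_of_list (χ := χ) he hκ (r := r) ps [] (by simpa using hl)
      (by simpa using hr) ?_
    · simpa using this
    · intro v
      obtain ⟨p, hp, c, hc⟩ := h v
      rcases List.mem_append.1 hp with hp | hp
      · exact ⟨p, by simp [hp], c, hc⟩
      · obtain rfl := List.mem_singleton.1 hp
        exact ⟨(χ, χ), by simp, c, hc.1, hc.1⟩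
  have h2 : cochain e (ps.map Prod.snd) χ - cochain e (ps.map Prod.snd) χ' = 0 := by
    have hlist : cochain e (ps.map Prod.snd) χ - cochain e (ps.map Prod.snd) χ' =
        ((ps.map Prod.snd).map (dfn e) ++ [fn (χ - χ')]).prod := by
      rw [cochain, cochain, List.prod_append, List.prod_singleton, fn_sub, mul_sub]
    rw [hlist]
    refine eq_zero_of_isNull fun v => isNull_list_prod (y := y) hκ ?_ ?_
    · intro x hx
      simp only [List.mem_append, List.mem_map, List.mem_singleton] at hx
      obtain ⟨q, -, rfl⟩ | rfl := hx
      · exact isLocal_dfn he q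
      · exact isLocal_fn hκ _
    · have hlen : (((ps.map Prod.snd).map (dfn e) ++ [fn (χ - χ')]).length : ℝ) * κ + κ ≤ r := by
        refine le_trans (le_of_eq ?_) hr
        simp
        ring
      obtain ⟨p, hp, c, hc1, hc2⟩ := h v
      rcases List.mem_append.1 hp with hp | hp
      · refine ⟨dfn e p.2, ?_, fun u hu => hc2.isNull_dfn he hκ hlen hu⟩
        exact List.mem_append_left _ (List.mem_map_of_mem (List.mem_map_of_mem hp))
      · obtain rfl := List.mem_singleton.1 hp
        exact ⟨fn (χ - χ'), by simp, fun u hu => hc1.isNull_fn_sub hc2 (by linarith) hu⟩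
  have h3 := h1.add (h2 ▸ IsExact.zero)
  simpa using h3

end FormOp

end Cochains

section SignCochains

set_option linter.unusedSectionVars false

namespace FormOp

/-- The indicator function of the nonnegative reals. -/
noncomputable def nonnegInd (x : ℝ) : ℝ := if 0 ≤ x then 1 else 0

theorem nonnegInd_mul {a : ℝ} (ha : 0 < a) (x : ℝ) : nonnegInd (a * x) = nonnegInd x := by
  simp [nonnegInd, mul_nonneg_iff_of_pos_left ha]

section Discrete

variable {ι V Y : Type*} [Fintype ι] [DecidableEq ι] [AddCommGroup V] {e : ι → V} {d : ℕ}

/-- The pull-back of a discrete volume form of the `d`-sphere along `F : V → ℝ^(d+1) ∖ 0`. -/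
noncomputable def signCochain (e : ι → V) (F : V → Fin (d + 1) → ℝ) : FormOp ι V :=
  cochain e (List.ofFn fun k : Fin d => fun v => nonnegInd (F v k.castSucc))
    fun v => nonnegInd (F v (Fin.last d))

theorem signCochain_smul (F : V → Fin (d + 1) → ℝ) {a : V → ℝ} (ha : ∀ v, 0 < a v) :
    signCochain e (fun v => a v • F v) = signCochain e F := by
  simp only [signCochain, Pi.smul_apply, smul_eq_mul, nonnegInd_mul (ha _)]

variable [PseudoMetricSpace Y] {y : V → Y} {r κ : ℝ}

theorem isClosedEven_signCochain (he : ∀ v i, dist (y (v + e i)) (y v) ≤ κ) (hκ : 0 ≤ κ)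
    (hd : Even d) (hr : (d + 2 : ℝ) * κ ≤ r) {F : V → Fin (d + 1) → ℝ}
    (h : ∀ v, ∃ k c, EqNear y r (fun u => nonnegInd (F u k)) v c) :
    IsClosedEven e (signCochain e F) := by
  refine isClosedEven_cochain he hκ (by simpa using hd) (by simpa using hr) fun v => ?_
  obtain ⟨k, c, hc⟩ := h v
  refine ⟨_, ?_, c, hc⟩
  induction k using Fin.lastCases with
  | last => simp
  | cast k => exact List.mem_append_left _ (List.mem_ofFn.2 ⟨k, rfl⟩)

theorem isExact_signCochain_sub (he : ∀ v i, dist (y (v + e i)) (y v) ≤ κ) (hκ : 0 ≤ κ)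
    (hd : Even d) (hr : (d + 2 : ℝ) * κ ≤ r) {F F' : V → Fin (d + 1) → ℝ}
    (h : ∀ v, ∃ k c, EqNear y r (fun u => nonnegInd (F u k)) v c ∧
      EqNear y r (fun u => nonnegInd (F' u k)) v c) :
    IsExact e (signCochain e F - signCochain e F') := by
  have key := isExact_cochain_sub he hκ (r := r) (χ := fun u => nonnegInd (F u (Fin.last d)))
    (χ' := fun u => nonnegInd (F' u (Fin.last d)))
    (ps := List.ofFn fun k : Fin d => (fun u => nonnegInd (F u k.castSucc),
      fun u => nonnegInd (F' u k.castSucc))) (by simpa using hd) (by simpa using hr) ?_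
  · rwa [List.map_ofFn, List.map_ofFn] at key
  · intro v
    obtain ⟨k, c, hc⟩ := h v
    induction k using Fin.lastCases with
    | last => exact ⟨_, List.mem_append_right _ (List.mem_singleton.2 rfl), c, hc⟩
    | cast k => exact ⟨_, List.mem_append_left _ (List.mem_ofFn.2 ⟨k, rfl⟩), c, hc⟩

theorem isNull_cochain_sub (he : ∀ v i, dist (y (v + e i)) (y v) ≤ κ) (hκ : 0 ≤ κ)
    {χ χ' : V → ℝ} (ps : List ((V → ℝ) × (V → ℝ))) {v : V}
    (h : ∀ u, dist (y u) (y v) ≤ ps.length * κ → (∀ p ∈ ps, p.1 u = p.2 u) ∧ χ u = χ' u) :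
    IsNull (cochain e (ps.map Prod.fst) χ - cochain e (ps.map Prod.snd) χ') v := by
  induction ps generalizing v with
  | nil =>
    intro φ
    simp [cochain, (h v (by simp)).2]
  | cons p ps ih =>
    intro φ
    simp only [List.length_cons, Nat.cast_add, Nat.cast_one] at h
    have h0 : 0 ≤ (ps.length : ℝ) * κ := by positivity
    have hdiff : cochain e ((p :: ps).map Prod.fst) χ - cochain e ((p :: ps).map Prod.snd) χ' =
        dfn e (p.1 - p.2) * cochain e (ps.map Prod.fst) χ +
        dfn e p.2 * (cochain e (ps.map Prod.fst) χ - cochain e (ps.map Prod.snd) χ') := by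
      simp only [cochain, List.map_cons, List.prod_cons, dfn_sub, sub_mul, mul_sub, mul_assoc]
      abel
    rw [hdiff, LinearMap.add_apply, Pi.add_apply, Module.End.mul_apply, Module.End.mul_apply]
    have h1 : IsNull (dfn e (p.1 - p.2)) v := by
      refine isNull_dfn fun i => ?_
      rw [Pi.sub_apply, Pi.sub_apply, (h v (by rw [dist_self]; linarith)).1 p (by simp),
        (h (v + e i) (by linarith [he v i])).1 p (by simp), sub_self, sub_self]
    rw [h1, zero_add]
    refine isLocal_dfn he p.2 _ v fun u hu => ih (v := u) (fun w hw => ?_) φ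
    have h2 := h w (by linarith [dist_triangle (y w) (y u) (y v)])
    exact ⟨fun q hq => h2.1 q (by simp [hq]), h2.2⟩

theorem isNull_signCochain_sub (he : ∀ v i, dist (y (v + e i)) (y v) ≤ κ) (hκ : 0 ≤ κ)
    {F F' : V → Fin (d + 1) → ℝ} {v : V}
    (h : ∀ u, dist (y u) (y v) ≤ d * κ → F u = F' u) :
    IsNull (signCochain e F - signCochain e F') v := by
  have key := isNull_cochain_sub he hκ (χ := fun u => nonnegInd (F u (Fin.last d)))
    (χ' := fun u => nonnegInd (F' u (Fin.last d))) (v := v)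
    (List.ofFn fun k : Fin d => (fun u => nonnegInd (F u k.castSucc),
      fun u => nonnegInd (F' u k.castSucc))) ?_
  · rwa [List.map_ofFn, List.map_ofFn] at key
  · intro u hu
    rw [List.length_ofFn] at hu
    refine ⟨fun p hp => ?_, by rw [h u hu]⟩
    obtain ⟨k, rfl⟩ := List.mem_ofFn.1 hp
    exact congrArg (fun w => nonnegInd (w k.castSucc)) (h u hu)

theorem isLocal_signCochain (he : ∀ v i, dist (y (v + e i)) (y v) ≤ κ) (hκ : 0 ≤ κ)
    (F : V → Fin (d + 1) → ℝ) : IsLocal y ((d + 1) * κ) (signCochain e F) := by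
  have h1 := IsLocal.list_prod (y := y) (r := κ)
    (l := (List.ofFn fun k : Fin d => fun v => nonnegInd (F v k.castSucc)).map (dfn e)) <| by
      intro x hx
      obtain ⟨f, -, rfl⟩ := List.mem_map.1 hx
      exact isLocal_dfn he f
  rw [List.length_map, List.length_ofFn] at h1
  rw [add_mul, one_mul]
  exact h1.mul (isLocal_fn hκ _)

end Discrete

section Continuous

open Topology
open scoped unitInterval

theorem eventually_nonneg_and_mul_lt (c : ℝ) {δ : ℝ} (hδ : 0 < δ) :
    ∀ᶠ κ in 𝓝[≥] (0 : ℝ), 0 ≤ κ ∧ c * κ < δ := by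
  refine Filter.Eventually.and self_mem_nhdsWithin (nhdsWithin_le_nhds ?_)
  have h : Continuous fun κ : ℝ => c * κ := by fun_prop
  exact h.continuousAt.eventually_lt_const (by simpa using hδ)

variable {Z : Type*} [PseudoMetricSpace Z] [CompactSpace Z] {d : ℕ}

theorem exists_nonnegInd_eq {F : Z → Fin d → ℝ} (hF : Continuous F) (h0 : ∀ z, F z ≠ 0) :
    ∃ δ > 0, ∀ z, ∃ k c, ∀ w, dist w z < δ → nonnegInd (F w k) = c := by
  obtain ⟨δ, hδ, h⟩ := lebesgue_number_lemma_of_metric (s := (Set.univ : Set Z))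
    (c := fun p : Fin d × Bool => {z | if p.2 then 0 < F z p.1 else F z p.1 < 0}) isCompact_univ
    (by
      rintro ⟨k, b⟩
      have hk : Continuous fun z => F z k := (continuous_apply k).comp hF
      cases b
      · simpa using isOpen_lt hk continuous_const
      · simpa using isOpen_lt continuous_const hk)
    (by
      intro z _
      obtain ⟨k, hk⟩ := Function.ne_iff.1 (h0 z)
      rcases lt_or_gt_of_ne hk with hk | hk
      · exact Set.mem_iUnion.2 ⟨(k, false), by simpa using hk⟩
      · exact Set.mem_iUnion.2 ⟨(k, true), by simpa using hk⟩)
  refine ⟨δ, hδ, fun z => ?_⟩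
  obtain ⟨⟨k, b⟩, hb⟩ := h z trivial
  cases b
  · refine ⟨k, 0, fun w hw => ?_⟩
    have : F w k < 0 := by simpa using hb (Metric.mem_ball.2 hw)
    simp [nonnegInd, this]
  · refine ⟨k, 1, fun w hw => ?_⟩
    have : 0 < F w k := by simpa using hb (Metric.mem_ball.2 hw)
    simp [nonnegInd, this.le]

variable {ι : Type*} [Fintype ι] [DecidableEq ι]

theorem eventually_isClosedEven_signCochain (hd : Even d) {F : Z → Fin (d + 1) → ℝ}
    (hF : Continuous F) (h0 : ∀ z, F z ≠ 0) :
    ∀ᶠ κ in 𝓝[≥] (0 : ℝ), ∀ (V : Type) [AddCommGroup V] (e : ι → V) (y : V → Z),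
      (∀ v i, dist (y (v + e i)) (y v) ≤ κ) →
      IsClosedEven e (signCochain e fun v => F (y v)) := by
  obtain ⟨δ, hδ, h⟩ := exists_nonnegInd_eq hF h0
  filter_upwards [eventually_nonneg_and_mul_lt (d + 2) hδ] with κ ⟨hκ, hr⟩ V _ e y he
  refine isClosedEven_signCochain he hκ hd le_rfl fun v => ?_
  obtain ⟨k, c, hc⟩ := h (y v)
  exact ⟨k, c, fun u hu => hc _ (hu.trans_lt hr)⟩

theorem eventually_isExact_signCochain_sub (hd : Even d) {G : Z × I → Fin (d + 1) → ℝ}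
    (hG : Continuous G) (h0 : ∀ z, G z ≠ 0) :
    ∀ᶠ κ in 𝓝[≥] (0 : ℝ), ∀ (V : Type) [AddCommGroup V] (e : ι → V) (y : V → Z),
      (∀ v i, dist (y (v + e i)) (y v) ≤ κ) →
      IsExact e ((signCochain e fun v => G (y v, 1)) - signCochain e fun v => G (y v, 0)) := by
  obtain ⟨δ, hδ, h⟩ := exists_nonnegInd_eq hG h0
  filter_upwards [eventually_nonneg_and_mul_lt (d + 2) hδ] with κ ⟨hκ, hr⟩ V _ e y he
  have step : ∀ s t : I, dist s t < δ →
      IsExact e ((signCochain e fun v => G (y v, s)) - signCochain e fun v => G (y v, t)) := by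
    intro s t hst
    refine isExact_signCochain_sub he hκ hd le_rfl fun v => ?_
    obtain ⟨k, c, hc⟩ := h (y v, t)
    refine ⟨k, c, fun u hu => hc _ ?_, fun u hu => hc _ ?_⟩
    · rw [Prod.dist_eq]
      exact max_lt (hu.trans_lt hr) hst
    · rw [Prod.dist_eq]
      exact max_lt (hu.trans_lt hr) (by simpa using hδ)
  have main : ∀ (j : ℕ) (t : I), (t : ℝ) ≤ j * (δ / 2) →
      IsExact e ((signCochain e fun v => G (y v, t)) - signCochain e fun v => G (y v, 0)) := by
    intro j
    induction j with
    | zero =>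
      intro t ht
      have : t = 0 := Subtype.ext (le_antisymm (by simpa using ht) t.2.1)
      rw [this, sub_self]
      exact IsExact.zero
    | succ j ih =>
      intro t ht
      push_cast at ht
      have ht1 := t.2.2
      let s : I := ⟨max (t - δ / 2) 0, le_max_right _ _, max_le (by linarith) zero_le_one⟩
      have h1 : dist t s < δ := by
        rw [Subtype.dist_eq, Real.dist_eq, abs_lt]
        have ht0 := t.2.1
        constructor
        · have : max ((t : ℝ) - δ / 2) 0 ≤ t := max_le (by linarith) ht0
          simp only [s]
          linarith
        · have := le_max_left ((t : ℝ) - δ / 2) 0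
          simp only [s]
          linarith
      have h2 := ih s (max_le (by linarith) (by positivity))
      simpa using (step t s h1).add h2
  obtain ⟨j, hj⟩ := exists_nat_gt (1 / (δ / 2))
  refine main j 1 ?_
  rw [div_lt_iff₀ (by positivity)] at hj
  simpa using hj.le

theorem exists_homotopy_extension {U A : Set Z} (hU : IsOpen U) (hA : IsClosed A) (hAU : A ⊆ U)
    {ξ₀ ξ₁ : Z → Fin d → ℝ} (hξ₀ : Continuous ξ₀) (hξ₀0 : ∀ z, ξ₀ z ≠ 0) {H : Z × I → Fin d → ℝ}
    (hH : ContinuousOn H (U ×ˢ Set.univ)) (hH0 : ∀ z ∈ U, ∀ t, H (z, t) ≠ 0)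
    (hH₀ : ∀ z ∈ U, H (z, 0) = ξ₀ z) (hH₁ : ∀ z ∈ U, H (z, 1) = ξ₁ z) :
    ∃ G : Z × I → Fin d → ℝ, Continuous G ∧ (∀ z, G z ≠ 0) ∧ (∀ z, G (z, 0) = ξ₀ z) ∧
      ∀ z ∈ A, G (z, 1) = ξ₁ z := by
  classical
  obtain ⟨B, hB, hAB, hBU⟩ := normal_exists_closure_subset hA hU hAU
  obtain ⟨χ, hχ0, hχ1, hχ⟩ := exists_continuous_zero_one_of_isClosed hB.isClosed_compl hA
    (Set.disjoint_compl_left_iff_subset.2 hAB)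
  let c : Z × I → I := fun p => ⟨χ p.1, hχ p.1⟩ * p.2
  have hc : Continuous c := by
    refine Continuous.mul (Continuous.subtype_mk ?_ _) continuous_snd
    exact χ.continuous.comp continuous_fst
  let G : Z × I → Fin d → ℝ := fun p => if p.1 ∈ U then H (p.1, c p) else ξ₀ p.1
  have hGU : ∀ p : Z × I, p.1 ∈ U → G p = H (p.1, c p) := fun p hp => if_pos hp
  have hGB : ∀ p : Z × I, p.1 ∉ B → G p = ξ₀ p.1 := by
    intro p hp
    by_cases hpU : p.1 ∈ U
    · have h0 : c p = 0 := by
        have : χ p.1 = 0 := hχ0 hp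
        ext
        simp [c, this]
      rw [hGU p hpU, h0, hH₀ _ hpU]
    · exact if_neg hpU
  refine ⟨G, continuous_iff_continuousAt.2 fun p => ?_, fun p => ?_, fun z => ?_, fun z hz => ?_⟩
  · by_cases hp : p.1 ∈ U
    · have hN : U ×ˢ Set.univ ∈ 𝓝 p := (hU.prod isOpen_univ).mem_nhds ⟨hp, trivial⟩
      have h1 : ContinuousOn (fun p : Z × I => H (p.1, c p)) (U ×ˢ Set.univ) :=
        hH.comp (continuous_fst.prodMk hc).continuousOn fun q hq => ⟨hq.1, trivial⟩
      refine (h1.continuousAt hN).congr ?_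
      filter_upwards [hN] with q hq
      exact (hGU q hq.1).symm
    · have hN : (closure B)ᶜ ×ˢ Set.univ ∈ 𝓝 p :=
        (isClosed_closure.isOpen_compl.prod isOpen_univ).mem_nhds ⟨fun h => hp (hBU h), trivial⟩
      refine (hξ₀.comp continuous_fst).continuousAt.congr ?_
      filter_upwards [hN] with q hq
      exact (hGB q fun h => hq.1 (subset_closure h)).symm
  · by_cases hp : p.1 ∈ U
    · rw [hGU p hp]
      exact hH0 _ hp _
    · simpa only [G, if_neg hp] using hξ₀0 p.1
  · by_cases hz : z ∈ U
    · rw [hGU _ hz, ← hH₀ z hz]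
      simp [c]
    · exact if_neg hz
  · rw [hGU _ (hAU hz), ← hH₁ z (hAU hz)]
    have h1 : c (z, 1) = 1 := by
      have : χ z = 1 := hχ1 hz
      ext
      simp [c, this]
    rw [h1]

theorem eventually_isExact_prod (hd : Even d) {K : Type*} [Finite K] (ks : List K)
    (hks : ∀ k, k ∈ ks) {U : K → Set Z} (hU : ∀ k, IsOpen (U k)) (hcover : ⋃ k, U k = Set.univ)
    {ξ₀ ξ₁ : K → Z → Fin (d + 1) → ℝ} (hξ₀ : ∀ k, Continuous (ξ₀ k)) (hξ₀0 : ∀ k z, ξ₀ k z ≠ 0)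
    (hξ₁ : ∀ k, Continuous (ξ₁ k)) (hξ₁0 : ∀ k z, ξ₁ k z ≠ 0) {H : K → Z × I → Fin (d + 1) → ℝ}
    (hH : ∀ k, ContinuousOn (H k) (U k ×ˢ Set.univ)) (hH0 : ∀ k, ∀ z ∈ U k, ∀ t, H k (z, t) ≠ 0)
    (hH₀ : ∀ k, ∀ z ∈ U k, H k (z, 0) = ξ₀ k z) (hH₁ : ∀ k, ∀ z ∈ U k, H k (z, 1) = ξ₁ k z) :
    ∀ᶠ κ in 𝓝[≥] (0 : ℝ), ∀ (V : Type) [AddCommGroup V] (e : ι → V) (y : V → Z),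
      (∀ v i, dist (y (v + e i)) (y v) ≤ κ) →
      IsExact e (ks.map fun k => (signCochain e fun v => ξ₁ k (y v)) -
        signCochain e fun v => ξ₀ k (y v)).prod := by
  obtain ⟨W, hWcover, hW, hWU⟩ := exists_iUnion_eq_closure_subset hU
    (fun _ => Set.toFinite _) hcover
  choose G hG hG0 hGξ₀ hGξ₁ using fun k => exists_homotopy_extension (hU k) isClosed_closure
    (hWU k) (hξ₀ k) (hξ₀0 k) (hH k) (hH0 k) (hH₀ k) (hH₁ k)
  obtain ⟨δ, hδ, hball⟩ := lebesgue_number_lemma_of_metric (s := (Set.univ : Set Z)) isCompact_univ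
    hW hWcover.ge
  have hcl (F : K → Z → Fin (d + 1) → ℝ) (hF : ∀ k, Continuous (F k)) (hF0 : ∀ k z, F k z ≠ 0) :=
    Filter.eventually_all.2 fun k =>
      eventually_isClosedEven_signCochain (ι := ι) hd (hF k) (hF0 k)
  have hG1 : ∀ k, Continuous fun z => G k (z, 1) := fun k => (hG k).comp (by fun_prop)
  filter_upwards [hcl ξ₀ hξ₀ hξ₀0, hcl ξ₁ hξ₁ hξ₁0, hcl _ hG1 fun k z => hG0 k _,
    Filter.eventually_all.2 fun k => eventually_isExact_signCochain_sub (ι := ι) hd (hG k) (hG0 k),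
    eventually_nonneg_and_mul_lt (ks.length * (d + 1) + d) hδ]
    with κ hcl₀ hcl₁ hclG hex hκ V _ e y he
  obtain ⟨hκ, hκδ⟩ := hκ
  have hzero : (ks.map fun k => (signCochain e fun v => ξ₁ k (y v)) -
      signCochain e fun v => G k (y v, 1)).prod = 0 := by
    refine eq_zero_of_isNull fun v => ?_
    refine isNull_list_prod (y := y) (r := (d + 1) * κ) (by positivity) ?_ ?_
    · intro x hx
      obtain ⟨k, -, rfl⟩ := List.mem_map.1 hx
      exact (isLocal_signCochain he hκ _).sub (isLocal_signCochain he hκ _)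
    · obtain ⟨k, hk⟩ := hball (y v) trivial
      refine ⟨_, List.mem_map_of_mem (hks k), fun u hu => ?_⟩
      refine isNull_signCochain_sub he hκ fun w hw => (hGξ₁ k _ (subset_closure (hk ?_))).symm
      rw [List.length_map] at hu
      rw [Metric.mem_ball]
      linarith [dist_triangle (y w) (y u) (y v)]
  have key := IsExact.list_prod_sub (l := ks)
    (a := fun k => (signCochain e fun v => ξ₁ k (y v)) - signCochain e fun v => ξ₀ k (y v))
    (b := fun k => (signCochain e fun v => ξ₁ k (y v)) - signCochain e fun v => G k (y v, 1))
    (fun k _ => (hcl₁ k V e y he).sub (hcl₀ k V e y he))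
    (fun k _ => (hcl₁ k V e y he).sub (hclG k V e y he))
    (fun k _ => by
      have := hex k V e y he
      simp only [hGξ₀] at this
      simpa using this)
  rwa [hzero, sub_zero] at key

end Continuous

end FormOp

end SignCochains

section Monomials

set_option linter.unusedSectionVars false

namespace FormOp

variable {ι V : Type*} [Fintype ι] [DecidableEq ι] [AddCommGroup V] (e : ι → V)

/-- The product of the `theta e i` over a list of directions. -/
noncomputable def thetaProd (I : List ι) : FormOp ι V := (I.map (theta e)).prod

theorem thetaProd_append (I J : List ι) :
    thetaProd e (I ++ J) = thetaProd e I * thetaProd e J := by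
  simp [thetaProd]

theorem theta_mul_self (i : ι) : theta e i * theta e i = 0 := by
  ext φ v
  simp [← mul_assoc, covec]

theorem skewCommute_thetaProd_theta (I : List ι) (i : ι) :
    SkewCommute (theta e i) ((-1) ^ I.length) (thetaProd e I) := by
  have h := SkewCommute.list_prod (a := theta e i) (s := -1) (l := I.map (theta e)) <| by
    intro x hx
    obtain ⟨j, -, rfl⟩ := List.mem_map.1 hx
    rw [SkewCommute, neg_one_smul]
    exact theta_mul_theta e j i
  rwa [List.length_map] at h

theorem commute_thetaProd {I : List ι} (hI : Even I.length) (J : List ι) :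
    Commute (thetaProd e I) (thetaProd e J) := by
  refine Commute.list_prod_right _ _ fun x hx => ?_
  obtain ⟨j, -, rfl⟩ := List.mem_map.1 hx
  have h := skewCommute_thetaProd_theta e I j
  rwa [SkewCommute, hI.neg_one_pow, one_smul] at h

theorem thetaProd_mul_self {I : List ι} (hI : I ≠ []) : thetaProd e I * thetaProd e I = 0 := by
  obtain ⟨i, J, rfl⟩ := List.exists_cons_of_ne_nil hI
  have h1 : thetaProd e (i :: J) = theta e i * thetaProd e J := by simp [thetaProd]
  have h2 := skewCommute_thetaProd_theta e J i
  rw [SkewCommute] at h2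
  rw [h1, mul_assoc, ← mul_assoc (thetaProd e J), h2, smul_mul_assoc, mul_smul_comm, mul_assoc,
    ← mul_assoc, theta_mul_self, zero_mul, smul_zero]

theorem thetaProd_mul_fn (I : List ι) (f : V → ℝ) :
    thetaProd e I * fn f = fn (fun v => f (v + (I.map e).sum)) * thetaProd e I := by
  induction I generalizing f with
  | nil => simp [thetaProd]
  | cons i I ih =>
    have h1 : thetaProd e (i :: I) = theta e i * thetaProd e I := by simp [thetaProd]
    rw [h1, mul_assoc, ih, ← mul_assoc, theta_mul_fn, mul_assoc]
    simp [add_assoc]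

theorem thetaProd_apply_one (I : List ι) (v : V) :
    thetaProd e I 1 v = (I.map covec).prod := by
  induction I generalizing v with
  | nil => simp [thetaProd]
  | cons i I ih =>
    have h1 : thetaProd e (i :: I) = theta e i * thetaProd e I := by simp [thetaProd]
    rw [h1, Module.End.mul_apply, theta_apply, ih]
    simp

theorem fn_mul_thetaProd_mul {f g : V → ℝ} {I : List ι} (J : List ι)
    (h : ∀ v, ∀ i ∈ I, g (v + e i) = g v) :
    fn f * thetaProd e I * (fn g * thetaProd e J) = fn (f * g) * thetaProd e (I ++ J) := by
  have hg : (fun v => g (v + (I.map e).sum)) = g := by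
    funext v
    induction I generalizing v with
    | nil => simp
    | cons i I ih =>
      rw [List.map_cons, List.sum_cons, ← add_assoc,
        ih (fun v j hj => h v j (by simp [hj])), h v i (by simp)]
  rw [mul_assoc, ← mul_assoc (thetaProd e I), thetaProd_mul_fn, hg, ← mul_assoc, ← mul_assoc,
    fn_mul_fn, mul_assoc, thetaProd_append]

theorem list_prod_fn_mul_thetaProd {J : Type*} {f : J → V → ℝ} {I : J → List ι} {l : List J}
    (hl : l.Nodup) (h : ∀ j j', j ≠ j' → ∀ v, ∀ i ∈ I j, f j' (v + e i) = f j' v) :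
    (l.map fun j => fn (f j) * thetaProd e (I j)).prod =
      fn (fun v => (l.map fun j => f j v).prod) * thetaProd e (l.flatMap I) := by
  induction l with
  | nil =>
    ext φ v
    simp [thetaProd]
  | cons j l ih =>
    rw [List.nodup_cons] at hl
    rw [List.map_cons, List.prod_cons, ih hl.2, fn_mul_thetaProd_mul, List.flatMap_cons]
    · rfl
    · intro v i hi
      congr 1
      refine List.map_congr_left fun j' hj' => h j j' (fun hj => hl.1 (hj ▸ hj')) v i hi

theorem prod_covec_ne_zero {I : List ι} (hI : I.Nodup) :
    (I.map covec).prod ≠ (0 : ExteriorAlgebra ℝ (ι → ℝ)) := by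
  let f : (ι → ℝ) [⋀^Fin I.length]→ₗ[ℝ] ℝ :=
    Matrix.detRowAlternating.compLinearMap (LinearMap.funLeft ℝ ℝ I.get)
  let ψ : ExteriorAlgebra ℝ (ι → ℝ) →ₗ[ℝ] ℝ :=
    ExteriorAlgebra.liftAlternating (Pi.single I.length f)
  have h1 : (I.map covec).prod =
      ExteriorAlgebra.ιMulti ℝ I.length fun i => (Pi.single (I.get i) 1 : ι → ℝ) := by
    rw [ExteriorAlgebra.ιMulti_apply]
    conv_lhs => rw [← List.ofFn_get I, List.map_ofFn]
    rfl
  have h2 : ψ (I.map covec).prod = 1 := by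
    rw [h1, ExteriorAlgebra.liftAlternating_apply_ιMulti, Pi.single_eq_same]
    have h3 : (fun i => LinearMap.funLeft ℝ ℝ I.get (Pi.single (I.get i) 1)) =
        (1 : Matrix (Fin I.length) (Fin I.length) ℝ) := by
      ext i j
      simp only [LinearMap.funLeft_apply, Pi.single_apply, Matrix.one_apply,
        hI.injective_get.eq_iff, eq_comm]
    change Matrix.det _ = _
    refine Eq.trans ?_ (Matrix.det_one (n := Fin I.length) (R := ℝ))
    exact congrArg Matrix.det h3
  intro h0
  rw [h0, map_zero] at h2
  exact zero_ne_one h2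

end FormOp

end Monomials

section Torus

set_option linter.unusedSectionVars false

namespace FormOp

/-- A map from the `d`-torus to `ℝ^(d+1) ∖ 0` of degree one. -/
noncomputable def torusMap {d : ℕ} (z : Fin d → Circle) : Fin (d + 1) → ℝ :=
  Fin.snoc (fun l => (z l : ℂ).im) (∑ l, (z l : ℂ).re - (d - 1))

theorem continuous_torusMap {d : ℕ} : Continuous (torusMap (d := d)) := by
  refine continuous_pi fun k => ?_
  have hz : ∀ l : Fin d, Continuous fun z : Fin d → Circle => (z l : ℂ) := fun l =>
    continuous_subtype_val.comp (continuous_apply l)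
  induction k using Fin.lastCases with
  | last =>
    simp only [torusMap, Fin.snoc_last]
    exact (continuous_finsetSum _ fun l _ => Complex.continuous_re.comp (hz l)).sub
      continuous_const
  | cast l =>
    simp only [torusMap, Fin.snoc_castSucc]
    exact Complex.continuous_im.comp (hz l)

theorem circle_re_le_one (z : Circle) : (z : ℂ).re ≤ 1 :=
  (Complex.re_le_norm (z : ℂ)).trans_eq (Circle.norm_coe z)

theorem torusMap_ne_zero {d : ℕ} (z : Fin d → Circle) : torusMap z ≠ 0 := by
  intro h
  have him : ∀ l, (z l : ℂ).im = 0 := fun l => by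
    simpa [torusMap] using congrFun h l.castSucc
  have hre : ∑ l, (z l : ℂ).re - (d - 1) = 0 := by
    simpa [torusMap] using congrFun h (Fin.last d)
  have hsq : ∀ l, (z l : ℂ).re * (z l : ℂ).re = 1 := fun l => by
    have := Circle.normSq_coe (z l)
    rw [Complex.normSq_apply, him l] at this
    simpa using this
  have hsum : ∑ l : Fin d, (1 - (z l : ℂ).re) = 1 := by
    simp only [Finset.sum_sub_distrib, Finset.sum_const, Finset.card_univ, Fintype.card_fin,
      nsmul_eq_mul, mul_one]
    linarith
  have hnonneg : ∀ l ∈ Finset.univ, 0 ≤ 1 - (z l : ℂ).re := fun l _ => by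
    linarith [circle_re_le_one (z l)]
  have hle : ∀ l, 1 - (z l : ℂ).re ≤ 1 := fun l =>
    (Finset.single_le_sum hnonneg (Finset.mem_univ l)).trans_eq hsum
  have hzero : ∀ l, 1 - (z l : ℂ).re = 0 := fun l => by
    have h1 := hle l
    have h2 := hsq l
    nlinarith
  simp [hzero] at hsum

variable {L : ℕ} [NeZero L]

/-- The coefficient of the pulled-back volume form on the discrete torus. -/
noncomputable def torusWeight {d : ℕ} (u : Fin d → ZMod L) : ℝ :=
  (∏ l, (nonnegInd (ZMod.toCircle (u l + 1) : ℂ).im - nonnegInd (ZMod.toCircle (u l) : ℂ).im)) *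
    nonnegInd (∑ l, (ZMod.toCircle (u l + 1) : ℂ).re - (d - 1))

theorem toCircle_one_eq : (ZMod.toCircle (1 : ZMod L) : Circle) = Circle.exp (2 * Real.pi / L) := by
  ext
  have h := ZMod.toCircle_natCast (N := L) 1
  rw [Nat.cast_one] at h
  rw [h, Circle.coe_exp]
  congr 1
  push_cast
  ring

theorem toCircle_one_re_pos (hL : 4 < L) : 0 < (ZMod.toCircle (1 : ZMod L) : ℂ).re := by
  have hL' : (4 : ℝ) < L := by exact_mod_cast hL
  have hpi := Real.pi_pos
  rw [toCircle_one_eq, Circle.coe_exp, Complex.exp_ofReal_mul_I_re]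
  refine Real.cos_pos_of_mem_Ioo ⟨?_, ?_⟩
  · have : 0 ≤ 2 * Real.pi / L := by positivity
    linarith
  · rw [div_lt_iff₀ (by linarith)]
    nlinarith

theorem toCircle_one_im_pos (hL : 4 < L) : 0 < (ZMod.toCircle (1 : ZMod L) : ℂ).im := by
  have hL' : (4 : ℝ) < L := by exact_mod_cast hL
  have hpi := Real.pi_pos
  rw [toCircle_one_eq, Circle.coe_exp, Complex.exp_ofReal_mul_I_im]
  refine Real.sin_pos_of_pos_of_lt_pi (by positivity) ?_
  rw [div_lt_iff₀ (by linarith)]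
  nlinarith

theorem toCircle_im_eq (t : ZMod L) : (ZMod.toCircle t : ℂ).im =
    (ZMod.toCircle (t + 1) : ℂ).im * (ZMod.toCircle (1 : ZMod L) : ℂ).re -
      (ZMod.toCircle (t + 1) : ℂ).re * (ZMod.toCircle (1 : ZMod L) : ℂ).im := by
  have h := Circle.normSq_coe (ZMod.toCircle (1 : ZMod L))
  rw [Complex.normSq_apply] at h
  rw [AddChar.map_add_eq_mul, Circle.coe_mul, Complex.mul_re, Complex.mul_im]
  linear_combination (-(ZMod.toCircle t : ℂ).im) * h

theorem toCircle_im_neg (hL : 4 < L) {t : ZMod L} (h : (ZMod.toCircle (t + 1) : ℂ).im < 0)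
    (h' : 0 ≤ (ZMod.toCircle (t + 1) : ℂ).re) : (ZMod.toCircle t : ℂ).im < 0 := by
  rw [toCircle_im_eq]
  nlinarith [mul_pos (neg_pos.2 h) (toCircle_one_re_pos hL),
    mul_nonneg h' (toCircle_one_im_pos hL).le]

theorem nonnegInd_sub_nonneg (hL : 4 < L) {t : ZMod L} (h : 0 ≤ (ZMod.toCircle (t + 1) : ℂ).re) :
    0 ≤ nonnegInd (ZMod.toCircle (t + 1) : ℂ).im - nonnegInd (ZMod.toCircle t : ℂ).im := by
  unfold nonnegInd
  split_ifs with h1 h2 h2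
  · simp
  · simp
  · exact absurd (toCircle_im_neg hL (not_le.1 h1) h) (not_lt.2 h2)
  · simp

theorem torusWeight_nonneg (hL : 4 < L) {d : ℕ} (u : Fin d → ZMod L) : 0 ≤ torusWeight u := by
  unfold torusWeight
  by_cases h : 0 ≤ ∑ l, (ZMod.toCircle (u l + 1) : ℂ).re - ((d : ℝ) - 1)
  · have hre : ∀ l, 0 ≤ (ZMod.toCircle (u l + 1) : ℂ).re := by
      intro l
      have h1 : ∑ l, (1 - (ZMod.toCircle (u l + 1) : ℂ).re) ≤ 1 := by
        simp only [Finset.sum_sub_distrib, Finset.sum_const, Finset.card_univ, Fintype.card_fin,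
          nsmul_eq_mul, mul_one]
        linarith
      have h2 := Finset.single_le_sum
        (fun l _ => sub_nonneg.2 (circle_re_le_one (ZMod.toCircle (u l + 1)))) (Finset.mem_univ l)
      linarith
    rw [nonnegInd, if_pos h, mul_one]
    exact Finset.prod_nonneg fun l _ => nonnegInd_sub_nonneg hL (hre l)
  · rw [nonnegInd, if_neg h, mul_zero]

theorem torusWeight_neg_one (hL : 4 < L) {d : ℕ} :
    torusWeight (fun _ : Fin d => (-1 : ZMod L)) = 1 := by
  have h1 : (ZMod.toCircle (-1 : ZMod L) : ℂ).im < 0 := by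
    rw [toCircle_im_eq]
    simpa using toCircle_one_im_pos hL
  simp [torusWeight, nonnegInd, not_le.2 h1]

variable {K : Type*} [Fintype K] [DecidableEq K] {d : ℕ}

/-- The unit steps of a discrete torus. -/
def unitStep (ι : Type*) [DecidableEq ι] (L : ℕ) (i : ι) : ι → ZMod L := Pi.single i 1

theorem add_unitStep_apply_of_ne {ι : Type*} [DecidableEq ι] (v : ι → ZMod L) {i j : ι}
    (h : j ≠ i) : (v + unitStep ι L i) j = v j := by
  simp [unitStep, Pi.single_eq_of_ne h]

theorem dfn_comp_apply {ι : Type*} [Fintype ι] [DecidableEq ι] (σ : ZMod L → ℝ) (i : ι) :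
    dfn (unitStep ι L) (fun v => σ (v i)) =
      fn (fun v => σ (v i + 1) - σ (v i)) * theta (unitStep ι L) i := by
  rw [dfn_eq_sum, Finset.sum_eq_single i]
  · simp [unitStep]
  · intro j _ hj
    simp only [add_unitStep_apply_of_ne _ hj.symm, sub_self]
    ext φ v
    simp
  · simp

/-- The directions in the `k`-th block. -/
def block (d : ℕ) (k : K) : List (K × Fin d) := (List.finRange d).map fun l => (k, l)

/-- The volume form of the `k`-th block. -/
noncomputable def blockForm (d L : ℕ) [NeZero L] (k : K) :
    FormOp (K × Fin d) (K × Fin d → ZMod L) :=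
  signCochain (unitStep _ L) fun v => torusMap fun l : Fin d => ZMod.toCircle (v (k, l))

theorem blockForm_eq (k : K) :
    blockForm d L k = fn (fun v => torusWeight fun l => v (k, l)) *
      thetaProd (unitStep _ L) (block d k) := by
  have h1 : ((List.ofFn fun l : Fin d => fun v : K × Fin d → ZMod L =>
      nonnegInd (torusMap (fun l : Fin d => ZMod.toCircle (v (k, l))) l.castSucc)).map
        (dfn (unitStep _ L))).prod =
      fn (fun v => ∏ l, (nonnegInd (ZMod.toCircle (v (k, l) + 1) : ℂ).im -
        nonnegInd (ZMod.toCircle (v (k, l)) : ℂ).im)) * thetaProd (unitStep _ L) (block d k) := by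
    have h2 := list_prod_fn_mul_thetaProd (unitStep (K × Fin d) L) (J := Fin d)
      (f := fun l v => nonnegInd (ZMod.toCircle (v (k, l) + 1) : ℂ).im -
        nonnegInd (ZMod.toCircle (v (k, l)) : ℂ).im) (I := fun l => [(k, l)])
      (List.nodup_finRange d) ?_
    · have h3 : (List.finRange d).flatMap (fun l => [(k, l)]) = block d k := by
        rw [block, List.map_eq_flatMap]
      simp only [h3, ← Fin.prod_univ_def] at h2
      rw [← h2, List.map_ofFn, List.ofFn_eq_map]
      congr 1
      refine List.map_congr_left fun l _ => ?_
      simp only [Function.comp_apply, torusMap, Fin.snoc_castSucc, thetaProd, List.map_singleton,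
        List.prod_singleton]
      exact dfn_comp_apply (fun t => nonnegInd (ZMod.toCircle t : ℂ).im) (k, l)
    · intro l l' hl v i hi
      rw [List.mem_singleton] at hi
      subst hi
      simp only [add_unitStep_apply_of_ne v (show ((k, l') : K × Fin d) ≠ (k, l) by simp [hl.symm])]
  have h4 : ∀ (v : K × Fin d → ZMod L) l,
      (v + ((block d k).map (unitStep _ L)).sum) (k, l) = v (k, l) + 1 := by
    intro v l
    rw [Pi.add_apply, block, List.map_map, ← Fin.sum_univ_def, Finset.sum_apply]
    simp [unitStep, Pi.single_apply]
  rw [blockForm, signCochain, cochain, h1, mul_assoc, thetaProd_mul_fn, ← mul_assoc, fn_mul_fn]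
  simp only [torusMap, Fin.snoc_last, h4]
  rfl

theorem length_block (k : K) : (block d k).length = d := by simp [block]

theorem torusWeight_add_unitStep {k k' : K} (h : k' ≠ k) (v : K × Fin d → ZMod L)
    {i : K × Fin d} (hi : i ∈ block d k) :
    (torusWeight fun l => (v + unitStep (K × Fin d) L i) (k', l)) =
      torusWeight fun l => v (k', l) := by
  obtain ⟨l, -, rfl⟩ := List.mem_map.1 hi
  congr 1
  funext l'
  exact add_unitStep_apply_of_ne v (by simp [h])

theorem blockForm_mul {k k' : K} (h : k' ≠ k) : blockForm d L k * blockForm d L k' =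
    fn (fun v => (torusWeight fun l => v (k, l)) * torusWeight fun l => v (k', l)) *
      thetaProd (unitStep _ L) (block d k ++ block d k') := by
  rw [blockForm_eq, blockForm_eq, fn_mul_thetaProd_mul]
  · rfl
  · exact fun v i hi => torusWeight_add_unitStep h v hi

theorem blockForm_mul_self (hd : 0 < d) (k : K) : blockForm d L k * blockForm d L k = 0 := by
  have h : block d k ≠ [] := by
    rw [← List.length_pos_iff, length_block]
    exact hd
  rw [blockForm_eq, mul_assoc, ← mul_assoc (thetaProd _ _), thetaProd_mul_fn, mul_assoc,
    thetaProd_mul_self _ h, mul_zero, mul_zero]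

theorem commute_blockForm (hd : Even d) {k k' : K} (h : k' ≠ k) :
    Commute (blockForm d L k) (blockForm d L k') := by
  have h1 := commute_thetaProd (unitStep (K × Fin d) L) (I := block d k)
    (by rwa [length_block]) (block d k')
  rw [Commute, SemiconjBy, blockForm_mul h, blockForm_mul h.symm, thetaProd_append,
    thetaProd_append, h1.eq]
  simp only [mul_comm]

variable {N : ℕ}

theorem blockForm_sub_mul_self (hd : Even d) (hd0 : 0 < d) (j : Fin N) :
    (blockForm d L (j, (1 : Fin 2)) - blockForm d L (j, (0 : Fin 2))) *
      (blockForm d L (j, (1 : Fin 2)) - blockForm d L (j, (0 : Fin 2))) =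
    fn (fun v => -2 * ((torusWeight fun l => v ((j, 0), l)) * torusWeight fun l => v ((j, 1), l)))
      * thetaProd (unitStep _ L) (block d (j, (0 : Fin 2)) ++ block d (j, (1 : Fin 2))) := by
  have hne : ((j, 1) : Fin N × Fin 2) ≠ (j, 0) := by simp
  have h1 := blockForm_mul (d := d) (L := L) hne
  have h2 : ∀ (f : ((Fin N × Fin 2) × Fin d → ZMod L) → ℝ),
      (fn fun v => -2 * f v : FormOp ((Fin N × Fin 2) × Fin d) _) = (-2 : ℝ) • fn f := by
    intro f
    ext φ v
    simp [mul_smul]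
  rw [h2, smul_mul_assoc, ← h1, sub_mul, mul_sub, mul_sub, blockForm_mul_self hd0,
    blockForm_mul_self hd0, ← (commute_blockForm hd hne).eq]
  module

/-- A list of all the blocks, paired up. -/
def blockPairs (N : ℕ) : List (Fin N × Fin 2) := (List.finRange N).flatMap fun j => [(j, 0), (j, 1)]

theorem mem_blockPairs (k : Fin N × Fin 2) : k ∈ blockPairs N := by
  obtain ⟨j, a⟩ := k
  refine List.mem_flatMap.2 ⟨j, List.mem_finRange j, ?_⟩
  fin_cases a <;> simp

theorem nodup_flatMap_block :
    ((List.finRange N).flatMap fun j =>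
      block d (j, (0 : Fin 2)) ++ block d (j, (1 : Fin 2))).Nodup := by
  have hmem : ∀ (k : Fin N × Fin 2) i, i ∈ block d k → i.1 = k := by
    intro k i hi
    obtain ⟨l, -, rfl⟩ := List.mem_map.1 hi
    rfl
  have hblock : ∀ k : Fin N × Fin 2, (block d k).Nodup := fun k =>
    (List.nodup_finRange d).map fun l l' h => (Prod.ext_iff.1 h).2
  refine List.nodup_flatMap.2 ⟨fun j _ => ?_, ?_⟩
  · refine (hblock _).append (hblock _) fun i h0 h1 => ?_
    simpa using (hmem _ _ h0).symm.trans (hmem _ _ h1)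
  · refine (List.nodup_finRange N).imp fun {j j'} hj i h0 h1 => hj ?_
    simp only [List.mem_append] at h0 h1
    have e0 : i.1.1 = j := by rcases h0 with h0 | h0 <;> rw [hmem _ _ h0]
    have e1 : i.1.1 = j' := by rcases h1 with h1 | h1 <;> rw [hmem _ _ h1]
    exact e0.symm.trans e1

theorem sum_prod_blockForm_sub_ne_zero (hd : Even d) (hd0 : 0 < d) (hL : 4 < L) :
    ∑ v, ((blockPairs N).map fun k => blockForm d L (k.1, (1 : Fin 2)) -
      blockForm d L (k.1, (0 : Fin 2))).prod 1 v ≠ 0 := by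
  have hpairs : ((blockPairs N).map fun k => blockForm d L (k.1, (1 : Fin 2)) -
      blockForm d L (k.1, (0 : Fin 2))).prod = ((List.finRange N).map fun j =>
        (blockForm d L (j, (1 : Fin 2)) - blockForm d L (j, (0 : Fin 2))) *
        (blockForm d L (j, (1 : Fin 2)) - blockForm d L (j, (0 : Fin 2)))).prod := by
    unfold blockPairs
    induction List.finRange N with
    | nil => simp
    | cons j l ih => simp [ih, mul_assoc]
  rw [hpairs]
  simp only [blockForm_sub_mul_self hd hd0]
  rw [list_prod_fn_mul_thetaProd (unitStep _ L) (List.nodup_finRange N)]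
  · simp only [Module.End.mul_apply, fn_apply, thetaProd_apply_one, ← Fin.prod_univ_def,
      Finset.prod_mul_distrib, Finset.prod_const]
    rw [← Finset.sum_smul, ← Finset.mul_sum]
    refine smul_ne_zero (mul_ne_zero (pow_ne_zero _ (by norm_num)) (ne_of_gt ?_))
      (prod_covec_ne_zero nodup_flatMap_block)
    refine Finset.sum_pos' (fun v _ => ?_) ⟨fun _ => -1, Finset.mem_univ _, ?_⟩
    · exact mul_nonneg (Finset.prod_nonneg fun j _ => torusWeight_nonneg hL _)
        (Finset.prod_nonneg fun j _ => torusWeight_nonneg hL _)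
    · simp [torusWeight_neg_one hL]
  · intro j j' hj v i hi
    rcases List.mem_append.1 hi with hi | hi <;>
    · rw [torusWeight_add_unitStep (by simp [hj.symm]) v hi,
        torusWeight_add_unitStep (by simp [hj.symm]) v hi]

end FormOp

end Torus

section LowerBound

open scoped unitInterval
open Topology

/-- A torus of configurations: the points move on spheres of distinct radii around the origin. -/
noncomputable def sphereConf {N d : ℕ} (z : Fin N → Fin d → Circle) : ConfSpace (N + 1) (d + 1) :=
  ⟨Fin.cons 0 fun j => ((j + 1 : ℝ) / ‖FormOp.torusMap (z j)‖) • FormOp.torusMap (z j), by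
    have hnorm : ∀ i : Fin (N + 1), ‖(Fin.cons 0 fun j : Fin N =>
        ((j + 1 : ℝ) / ‖FormOp.torusMap (z j)‖) • FormOp.torusMap (z j) :
          Fin (N + 1) → Fin (d + 1) → ℝ) i‖ = i := by
      intro i
      induction i using Fin.cases with
      | zero => simp
      | succ j =>
        have h := norm_ne_zero_iff.2 (FormOp.torusMap_ne_zero (z j))
        have h0 : (0 : ℝ) ≤ j + 1 := by positivity
        rw [Fin.cons_succ, norm_smul, norm_div, norm_norm, div_mul_cancel₀ _ h, Real.norm_eq_abs,
          abs_of_nonneg h0]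
        simp
    intro i i' hii'
    have h := (hnorm i).symm.trans ((congrArg norm hii').trans (hnorm i'))
    exact Fin.ext (by exact_mod_cast h)⟩

theorem sphereConf_sub {N d : ℕ} (z : Fin N → Fin d → Circle) (j : Fin N) :
    (sphereConf z).1 j.succ - (sphereConf z).1 0 =
      ((j + 1 : ℝ) / ‖FormOp.torusMap (z j)‖) • FormOp.torusMap (z j) := by
  simp [sphereConf]

theorem continuous_sphereConf_sub {N d : ℕ} (j : Fin N) :
    Continuous fun z : Fin N → Fin d → Circle =>
      ((j + 1 : ℝ) / ‖FormOp.torusMap (z j)‖) • FormOp.torusMap (z j) := by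
  have h : Continuous fun z : Fin N → Fin d → Circle => FormOp.torusMap (z j) :=
    FormOp.continuous_torusMap.comp (continuous_apply j)
  exact (continuous_const.div h.norm fun z =>
    norm_ne_zero_iff.2 (FormOp.torusMap_ne_zero (z j))).smul h

theorem continuous_sphereConf {N d : ℕ} : Continuous (sphereConf (N := N) (d := d)) := by
  refine Continuous.subtype_mk (continuous_pi fun i => ?_) _
  induction i using Fin.cases with
  | zero => exact continuous_const
  | succ j => exact continuous_sphereConf_sub j

theorem exists_difference_homotopy {Z : Type*} [TopologicalSpace Z] {n m : ℕ}
    {U : Set (ConfSpace n m × ConfSpace n m)} (hU : HasMotionPlanningSection (ConfSpace n m) U)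
    {Q : Z → ConfSpace n m × ConfSpace n m} (hQ : Continuous Q) {i j : Fin n} (hij : i ≠ j) :
    ∃ H : Z × I → Fin m → ℝ, ContinuousOn H ((Q ⁻¹' U) ×ˢ Set.univ) ∧
      (∀ z ∈ Q ⁻¹' U, ∀ t, H (z, t) ≠ 0) ∧
      (∀ z ∈ Q ⁻¹' U, H (z, 0) = (Q z).1.1 i - (Q z).1.1 j) ∧
      ∀ z ∈ Q ⁻¹' U, H (z, 1) = (Q z).2.1 i - (Q z).2.1 j := by
  classical
  obtain ⟨s, hs⟩ := hU
  let H : Z × I → Fin m → ℝ := fun p =>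
    if h : Q p.1 ∈ U then (s ⟨Q p.1, h⟩ p.2).1 i - (s ⟨Q p.1, h⟩ p.2).1 j else 0
  have hH : ∀ z (h : Q z ∈ U) t, H (z, t) = (s ⟨Q z, h⟩ t).1 i - (s ⟨Q z, h⟩ t).1 j :=
    fun z h t => dif_pos h
  refine ⟨H, ?_, fun z hz t => ?_, fun z hz => ?_, fun z hz => ?_⟩
  · rw [continuousOn_iff_continuous_domRestrict]
    have h1 : Continuous fun p : (Q ⁻¹' U) ×ˢ (Set.univ : Set I) =>
        s ⟨Q p.1.1, p.2.1⟩ p.1.2 := by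
      refine Continuous.eval (s.continuous.comp ?_) (by fun_prop)
      exact Continuous.subtype_mk (hQ.comp (by fun_prop)) _
    have h2 : Continuous fun p : (Q ⁻¹' U) ×ˢ (Set.univ : Set I) =>
        (s ⟨Q p.1.1, p.2.1⟩ p.1.2).1 i - (s ⟨Q p.1.1, p.2.1⟩ p.1.2).1 j :=
      ((continuous_apply i).comp (continuous_subtype_val.comp h1)).sub
        ((continuous_apply j).comp (continuous_subtype_val.comp h1))
    refine h2.congr fun p => ?_
    exact (hH p.1.1 p.2.1 p.1.2).symm
  · rw [hH z hz, sub_ne_zero]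
    exact fun h => hij ((s ⟨Q z, hz⟩ t).2 h)
  · rw [hH z hz, (hs ⟨Q z, hz⟩).1]
  · rw [hH z hz, (hs ⟨Q z, hz⟩).2]

theorem HasTCCover.exists_cover {X : Type*} [TopologicalSpace X] {k : ℕ} (h : HasTCCover X k)
    {K : Type*} [Fintype K] (hk : k ≤ Fintype.card K) :
    ∃ U : K → Set (X × X), (∀ i, IsOpen (U i)) ∧ ⋃ i, U i = Set.univ ∧
      ∀ i, HasMotionPlanningSection X (U i) := by
  classical
  obtain ⟨U, hU, hcover, hs⟩ := h
  let f := Fintype.equivFin K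
  refine ⟨fun i => if h : (f i : ℕ) < k then U ⟨f i, h⟩ else ∅, fun i => ?_, ?_, fun i => ?_⟩
  · by_cases h : (f i : ℕ) < k
    · simpa only [dif_pos h] using hU _
    · simp [h]
  · refine Set.eq_univ_of_forall fun p => ?_
    obtain ⟨i, hi⟩ := Set.mem_iUnion.1 (hcover.ge (Set.mem_univ p))
    refine Set.mem_iUnion.2 ⟨f.symm ⟨i, i.2.trans_le hk⟩, ?_⟩
    simpa using hi
  · by_cases h : (f i : ℕ) < k
    · simpa only [dif_pos h] using hs _
    · simp only [dif_neg h]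
      exact ⟨⟨fun p => p.2.elim, continuous_of_discreteTopology⟩, fun p => p.2.elim⟩

theorem Circle.dist_mul_self_left (a b : Circle) : dist (a * b) a = dist b 1 := by
  change dist ((a * b : Circle) : ℂ) (a : ℂ) = dist (b : ℂ) ((1 : Circle) : ℂ)
  rw [dist_eq_norm, dist_eq_norm, Circle.coe_mul, Circle.coe_one, ← mul_sub_one, norm_mul,
    Circle.norm_coe, one_mul]

theorem dist_toCircle_add_unitStep_le {ι : Type*} [Fintype ι] [DecidableEq ι] {L : ℕ} [NeZero L]
    (v : ι → ZMod L) (i : ι) :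
    dist (fun j => ZMod.toCircle ((v + FormOp.unitStep ι L i) j)) (fun j => ZMod.toCircle (v j)) ≤
      dist (Circle.exp (2 * Real.pi / L)) 1 := by
  refine (dist_pi_le_iff dist_nonneg).2 fun j => ?_
  by_cases h : j = i
  · subst h
    rw [← FormOp.toCircle_one_eq, Pi.add_apply, FormOp.unitStep, Pi.single_eq_same,
      AddChar.map_add_eq_mul]
    exact (Circle.dist_mul_self_left _ _).le
  · rw [FormOp.add_unitStep_apply_of_ne v h, dist_self]
    exact dist_nonneg

theorem tendsto_dist_exp_one :
    Filter.Tendsto (fun L : ℕ => dist (Circle.exp (2 * Real.pi / L)) 1) Filter.atTop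
      (𝓝[≥] (0 : ℝ)) := by
  refine tendsto_nhdsWithin_iff.2 ⟨?_, Filter.Eventually.of_forall fun L => dist_nonneg⟩
  have h1 : Filter.Tendsto (fun L : ℕ => 2 * Real.pi / (L : ℝ)) Filter.atTop (𝓝 0) :=
    tendsto_const_div_atTop_nhds_zero_nat _
  have h2 : Continuous fun x : ℝ => dist (Circle.exp x) 1 :=
    Circle.exp.continuous.dist continuous_const
  have h3 := (h2.tendsto 0).comp h1
  simpa [Function.comp_def] using h3

theorem lt_of_hasTCCover_confSpace {N d k : ℕ} (hd : Even d) (hd0 : 0 < d)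
    (h : HasTCCover (ConfSpace (N + 1) (d + 1)) k) : 2 * N < k := by
  by_contra! hk
  obtain ⟨U, hU, hcover, hs⟩ := h.exists_cover (K := Fin N × Fin 2)
    (by simpa [mul_comm] using hk)
  let Z : Type := (Fin N × Fin 2) × Fin d → Circle
  let p : Fin 2 → Z → Fin N → Fin d → Circle := fun a z j l => z ((j, a), l)
  have hp : ∀ a, Continuous (p a) := fun a =>
    continuous_pi fun j => continuous_pi fun l => continuous_apply _
  let Q : Z → ConfSpace (N + 1) (d + 1) × ConfSpace (N + 1) (d + 1) := fun z =>
    (sphereConf (p 0 z), sphereConf (p 1 z))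
  have hQ : Continuous Q :=
    (continuous_sphereConf.comp (hp 0)).prodMk (continuous_sphereConf.comp (hp 1))
  choose H hH hH0 hH₀ hH₁ using fun i : Fin N × Fin 2 =>
    exists_difference_homotopy (hs i) hQ (Fin.succ_ne_zero i.1)
  let ξ : Fin 2 → Fin N × Fin 2 → Z → Fin (d + 1) → ℝ := fun a i z =>
    ((i.1 + 1 : ℝ) / ‖FormOp.torusMap (p a z i.1)‖) • FormOp.torusMap (p a z i.1)
  have hpos : ∀ a (i : Fin N × Fin 2) z, 0 < (i.1 + 1 : ℝ) / ‖FormOp.torusMap (p a z i.1)‖ :=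
    fun a i z => div_pos (by positivity) (norm_pos_iff.2 (FormOp.torusMap_ne_zero _))
  have hξ : ∀ a i, Continuous (ξ a i) := fun a i => (continuous_sphereConf_sub i.1).comp (hp a)
  have hξ0 : ∀ a i z, ξ a i z ≠ 0 := fun a i z =>
    smul_ne_zero (hpos a i z).ne' (FormOp.torusMap_ne_zero _)
  have hex := FormOp.eventually_isExact_prod (ι := (Fin N × Fin 2) × Fin d) hd
    (FormOp.blockPairs N) FormOp.mem_blockPairs (fun i => (hU i).preimage hQ)
    (by rw [← Set.preimage_iUnion, hcover, Set.preimage_univ])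
    (hξ 0) (hξ0 0) (hξ 1) (hξ0 1) hH hH0
    (fun i z hz => (hH₀ i z hz).trans (sphereConf_sub _ _))
    (fun i z hz => (hH₁ i z hz).trans (sphereConf_sub _ _))
  obtain ⟨L, hL, hexL⟩ := ((Filter.eventually_gt_atTop 4).and
    (tendsto_dist_exp_one.eventually hex)).exists
  have : NeZero L := ⟨by omega⟩
  have hexact := hexL _ (FormOp.unitStep _ L)
    (fun v i => (ZMod.toCircle (v i) : Circle)) fun v i => dist_toCircle_add_unitStep_le v i
  simp only [ξ, FormOp.signCochain_smul _ fun v => hpos _ _ _] at hexact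
  exact FormOp.sum_prod_blockForm_sub_ne_zero hd hd0 hL hexact.sum_apply_one

end LowerBound

/-- for every odd `m ≥ 3` and `n ≥ 2`, the topological complexity of
the configuration space of `n` ordered distinct points in `ℝ^m` equals `2n - 1`. -/
theorem tc_config_space_odd (m n : ℕ) (hm : Odd m) (hm3 : 3 ≤ m) (hn : 2 ≤ n) :
    TopComplexity (ConfSpace n m) = (2 * n - 1 : ℕ) := by
  obtain ⟨p, rfl⟩ : ∃ p, m = 2 * p + 3 := by
    obtain ⟨q, rfl⟩ := hm
    exact ⟨q - 1, by omega⟩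
  obtain ⟨N, rfl⟩ : ∃ N, n = N + 1 := ⟨n - 1, by omega⟩
  refine le_antisymm (sInf_le ⟨_, rfl, ?_⟩) (le_sInf ?_)
  · exact hasTCCover_confSpace (d := 2 * p + 1) (by omega)
  · rintro _ ⟨k, rfl, hk⟩
    have h := lt_of_hasTCCover_confSpace (d := 2 * p + 2) ⟨p + 1, by omega⟩ (by omega) hk
    exact_mod_cast (by omega : 2 * (N + 1) - 1 ≤ k)
end

section
/- Let A be the Orlik–Solomon algebra of a simple matroid M of rank r on a ground set S with a fixed linear order, and let Ā = A ⊗ A be the graded tensor square with ē_s = 1⊗e_s − e_s⊗1. Suppose S is the disjoint union of sets T₁ and T₂ such that T₁ is independent and T₂ ∪ {s} is independent for every s ∈ S. Then the product π = ∏_{s∈S} ē_s is nonzero in Ā. -/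
open scoped Classical

noncomputable section OrlikSolomon

variable (K : Type*) [Field K]

/-- The generator `e_s` of the exterior algebra on the free module with basis `S`. -/
def extGen {α : Type*} (s : α) : ExteriorAlgebra K (α →₀ K) :=
  ExteriorAlgebra.ι K (Finsupp.single s 1)

/-- The degree `-1` differential `∂` of the exterior algebra (the graded derivation
with `∂ e_s = 1`), realized as contraction with the linear functional sending each
basis vector to `1`. -/
def extBoundary (α : Type*) : ExteriorAlgebra K (α →₀ K) →ₗ[K] ExteriorAlgebra K (α →₀ K) :=
  CliffordAlgebra.contractLeft (Finsupp.linearCombination K fun _ : α => (1 : K))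

/-- The relations of the Orlik–Solomon algebra of the matroid `Mat`: all elements
`∂(e_{s₁} ∧ ⋯ ∧ e_{s_p})` for dependent subsets `{s₁, …, s_p}` are set to zero. -/
def osRel {α : Type*} (Mat : Matroid α) :
    ExteriorAlgebra K (α →₀ K) → ExteriorAlgebra K (α →₀ K) → Prop :=
  fun x y => y = 0 ∧ ∃ (p : ℕ) (f : Fin p → α), Function.Injective f ∧
    ¬ Mat.Indep (Set.range f) ∧
    x = extBoundary K α (List.ofFn fun i => extGen K (f i)).prod

/-- The Orlik–Solomon algebra of the matroid `Mat` over `K`. -/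
abbrev OSAlgebra {α : Type*} (Mat : Matroid α) := RingQuot (osRel K Mat)

/-- The generator `e_s` of the Orlik–Solomon algebra. -/
def osE {α : Type*} (Mat : Matroid α) (s : α) : OSAlgebra K Mat :=
  RingQuot.mkRingHom (osRel K Mat) (extGen K s)

/-- The ordered monomial `m(T) = e_{t₁} ⋯ e_{t_p}` associated to a tuple `T`. -/
def osMonomial {α : Type*} (Mat : Matroid α) {p : ℕ} (T : Fin p → α) : OSAlgebra K Mat :=
  (List.ofFn fun i => osE K Mat (T i)).prod

end OrlikSolomon

noncomputable section

variable (K : Type*) [Field K]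

/-- The graded tensor square `Ā = A ⊗ A` of the Orlik–Solomon algebra, with its
sign-twisted (Koszul) multiplication, realized concretely as the quotient of the
exterior algebra on two copies of the ground set by the Orlik–Solomon relations of
each factor (for exterior-type algebras, `Λ(V) ⊗̂ Λ(V) ≅ Λ(V ⊕ V)`). -/
def osRel₂ {α : Type*} (Mat : Matroid α) :
    ExteriorAlgebra K ((α ⊕ α) →₀ K) → ExteriorAlgebra K ((α ⊕ α) →₀ K) → Prop :=
  fun x y => y = 0 ∧ ∃ (p : ℕ) (f : Fin p → α), Function.Injective f ∧
    ¬ Mat.Indep (Set.range f) ∧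
    (x = extBoundary K (α ⊕ α) (List.ofFn fun i => extGen K (Sum.inl (f i))).prod ∨
     x = extBoundary K (α ⊕ α) (List.ofFn fun i => extGen K (Sum.inr (f i))).prod)

/-- The graded tensor square of the Orlik–Solomon algebra. -/
abbrev OSTensorSquare {α : Type*} (Mat : Matroid α) := RingQuot (osRel₂ K Mat)

/-- The zero divisor `ē_s = 1 ⊗ e_s - e_s ⊗ 1` of the graded tensor square. -/
def osEbar {α : Type*} (Mat : Matroid α) (s : α) : OSTensorSquare K Mat :=
  RingQuot.mkRingHom (osRel₂ K Mat) (extGen K (Sum.inr s) - extGen K (Sum.inl s))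

/-- The level of `s` with respect to the flag of flats spanned by the initial segments of `T`:
the least `t ∈ T` such that `s` is spanned by the elements of `T` up to `t`, and `⊤` if `s` is not
spanned by `T`. -/
def flagLevel {α : Type*} [Fintype α] [LinearOrder α] (M : Matroid α) (T : Set α) (s : α) :
    WithTop α :=
  (Finset.univ.filter fun t => t ∈ T ∧ s ∈ M.closure (T ∩ Set.Iic t)).inf (fun t : α => (t : WithTop α))

section FlagLevel

variable {α : Type*} [Fintype α] [LinearOrder α] {M : Matroid α} {T : Set α}

lemma flagLevel_le {s t : α} (ht : t ∈ T) (h : s ∈ M.closure (T ∩ Set.Iic t)) :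
    flagLevel M T s ≤ t := by
  unfold flagLevel
  exact Finset.inf_le (f := fun t : α => (t : WithTop α))
    (Finset.mem_filter.2 ⟨Finset.mem_univ t, ht, h⟩)

lemma exists_flagLevel_eq {s : α} (h : flagLevel M T s ≠ ⊤) :
    ∃ t ∈ T, s ∈ M.closure (T ∩ Set.Iic t) ∧ flagLevel M T s = t := by
  have hne : (Finset.univ.filter fun t => t ∈ T ∧ s ∈ M.closure (T ∩ Set.Iic t)).Nonempty := by
    by_contra hcon
    rw [Finset.not_nonempty_iff_eq_empty] at hcon
    exact h (by rw [flagLevel, hcon, Finset.inf_empty])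
  obtain ⟨t, ht, hinf⟩ := Finset.exists_mem_eq_inf _ hne (fun t : α => (t : WithTop α))
  simp only [Finset.mem_filter, Finset.mem_univ, true_and] at ht
  exact ⟨t, ht.1, ht.2, hinf⟩

lemma flagLevel_eq_top {s : α} (h : s ∉ M.closure T) : flagLevel M T s = ⊤ := by
  by_contra hcon
  obtain ⟨t, -, hs, -⟩ := exists_flagLevel_eq hcon
  exact h (M.closure_subset_closure Set.inter_subset_left hs)

lemma flagLevel_of_mem (hT : M.Indep T) {t : α} (ht : t ∈ T) : flagLevel M T t = t := by
  have hle : flagLevel M T t ≤ t := flagLevel_le ht <|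
    M.mem_closure_of_mem' ⟨ht, le_rfl⟩ (hT.subset_ground ht)
  obtain ⟨u, -, htu, hu⟩ := exists_flagLevel_eq (ne_top_of_le_ne_top WithTop.coe_ne_top hle)
  rw [hu, WithTop.coe_le_coe] at hle
  rcases hle.eq_or_lt with rfl | hlt
  · exact hu
  · refine absurd (M.closure_subset_closure ?_ htu) (hT.notMem_closure_sdiff_of_mem ht)
    rintro x ⟨hx, hxu⟩
    exact ⟨hx, fun h => (lt_of_le_of_lt hxu hlt).ne h⟩

/-- A set on which the flag level is injective is independent, provided there are no loops. -/
lemma indep_of_injOn_flagLevel (hE : M.E = Set.univ) (hloop : ∀ s, M.Indep {s}) {C : Set α}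
    (hC : Set.InjOn (flagLevel M T) C) : M.Indep C := by
  by_contra hdep
  have hd : M.Dep C := (M.not_indep_iff (by rw [hE]; exact Set.subset_univ _)).1 hdep
  obtain ⟨D, hDC, hD⟩ := hd.exists_isCircuit_subset
  obtain ⟨c, hc, hmax⟩ := Set.exists_max_image D (flagLevel M T) D.toFinite hD.nonempty
  have hlt : ∀ d ∈ D \ {c}, flagLevel M T d < flagLevel M T c := fun d hd =>
    lt_of_le_of_ne (hmax d hd.1) fun h => hd.2 (hC (hDC hd.1) (hDC hc) h)
  have hcl : c ∈ M.closure (T ∩ {t | (t : WithTop α) < flagLevel M T c}) := by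
    refine M.closure_subset_closure_of_subset_closure ?_
      (hD.mem_closure_sdiff_singleton_of_mem hc)
    intro d hd
    obtain ⟨t, -, hdt, ht⟩ := exists_flagLevel_eq (hlt d hd).ne_top
    refine M.closure_subset_closure ?_ hdt
    rintro x ⟨hx, hxt⟩
    exact ⟨hx, lt_of_le_of_lt (WithTop.coe_le_coe.2 hxt) (ht ▸ hlt d hd)⟩
  rcases (T ∩ {t | (t : WithTop α) < flagLevel M T c}).eq_empty_or_nonempty with he | hne
  · rw [he] at hcl
    have := (hloop c).notMem_closure_sdiff_of_mem (Set.mem_singleton c)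
    exact this (by simpa using hcl)
  · obtain ⟨t, ⟨htT, htc⟩, htmax⟩ := Set.exists_max_image _ id (Set.toFinite _) hne
    refine absurd (flagLevel_le htT (M.closure_subset_closure ?_ hcl)) (not_le.2 htc)
    exact fun x hx => ⟨hx.1, htmax x hx⟩

end FlagLevel

section Exterior

variable {K} {V W : Type*} [AddCommGroup V] [Module K V] [AddCommGroup W] [Module K W]

lemma map_contractLeft (L : V →ₗ[K] W) (d : Module.Dual K W) (x : ExteriorAlgebra K V) :
    ExteriorAlgebra.map L (CliffordAlgebra.contractLeft (Q := 0) (d ∘ₗ L) x) =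
      CliffordAlgebra.contractLeft (Q := 0) d (ExteriorAlgebra.map L x) := by
  induction x using CliffordAlgebra.left_induction with
  | algebraMap r =>
    rw [CliffordAlgebra.contractLeft_algebraMap, AlgHom.commutes]
    exact (map_zero _).trans (CliffordAlgebra.contractLeft_algebraMap 0 d r).symm
  | add x y hx hy => simp only [map_add, hx, hy]
  | ι_mul x v hx =>
    rw [CliffordAlgebra.contractLeft_ι_mul, map_sub, map_smul, map_mul, map_mul, hx]
    erw [ExteriorAlgebra.map_apply_ι]
    exact (CliffordAlgebra.contractLeft_ι_mul (Q := 0) _ _ _).symm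

lemma contractLeft_list_prod_eq_zero (d : Module.Dual K V) (l : List V) (h : ∀ v ∈ l, d v = 0) :
    CliffordAlgebra.contractLeft (Q := 0) d (l.map (ExteriorAlgebra.ι K)).prod = 0 := by
  induction l with
  | nil => exact CliffordAlgebra.contractLeft_one 0 d
  | cons v l ih =>
    rw [List.map_cons, List.prod_cons]
    erw [CliffordAlgebra.contractLeft_ι_mul]
    rw [ih fun w hw => h w (List.mem_cons_of_mem _ hw), h v List.mem_cons_self, zero_smul,
      mul_zero, sub_zero]

lemma list_prod_extGen_ne_zero {α : Type*} (l : List α) (hl : l.Nodup) :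
    (l.map (extGen K)).prod ≠ 0 := by
  induction l with
  | nil => simp
  | cons a l ih =>
    rw [List.nodup_cons] at hl
    intro h
    refine ih hl.2 ?_
    have hz : CliffordAlgebra.contractLeft (Q := 0) (Finsupp.lapply a : (α →₀ K) →ₗ[K] K)
        (l.map (extGen K)).prod = 0 := by
      have := contractLeft_list_prod_eq_zero (Finsupp.lapply a : (α →₀ K) →ₗ[K] K)
        (l.map fun s => Finsupp.single s 1) (by
          intro v hv
          obtain ⟨s, hs, rfl⟩ := List.mem_map.1 hv
          exact Finsupp.single_eq_of_ne (by rintro rfl; exact hl.1 hs))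
      rwa [List.map_map] at this
    have h2 := congrArg
      (CliffordAlgebra.contractLeft (Q := 0) (Finsupp.lapply a : (α →₀ K) →ₗ[K] K)) h
    rw [List.map_cons, List.prod_cons, map_zero] at h2
    unfold extGen at h2
    erw [CliffordAlgebra.contractLeft_ι_mul] at h2
    unfold extGen at hz
    rw [hz] at h2
    simp only [Finsupp.lapply_apply, Finsupp.single_eq_same, one_smul, mul_zero, sub_zero] at h2
    exact h2

lemma map_extBoundary_list_prod_eq_zero {β γ : Type*} (φ : β → γ) {p : ℕ} (f : Fin p → β)
    (hf : ¬ Function.Injective (φ ∘ f)) :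
    ExteriorAlgebra.map (Finsupp.lmapDomain K K φ)
      (extBoundary K β (List.ofFn fun i => extGen K (f i)).prod) = 0 := by
  have hd : (Finsupp.linearCombination K fun _ : β => (1 : K)) =
      (Finsupp.linearCombination K fun _ : γ => (1 : K)) ∘ₗ Finsupp.lmapDomain K K φ := by
    ext b
    simp
  have hz : ExteriorAlgebra.map (Finsupp.lmapDomain K K φ)
      (List.ofFn fun i => extGen K (f i)).prod = 0 := by
    have h := ExteriorAlgebra.map_apply_ιMulti (Finsupp.lmapDomain K K φ)
      (fun i => Finsupp.single (f i) (1 : K))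
    rw [ExteriorAlgebra.ιMulti_apply] at h
    refine h.trans (ExteriorAlgebra.ιMulti_eq_zero_of_not_inj fun hinj => hf fun i j hij => hinj ?_)
    simpa using congrArg (fun c => Finsupp.single c (1 : K)) hij
  rw [extBoundary, hd, map_contractLeft, hz, map_zero]

end Exterior

/-- let `Mat` be a simple matroid on the (linearly ordered, finite)
ground set `S = α`.  If `S` is the disjoint union of `T₁` and `T₂` where `T₁` is
independent and `T₂ ∪ {s}` is independent for every `s ∈ S`, then the product
`π = ∏_{s ∈ S} ē_s` (taken in the fixed order on `S`) is nonzero in the graded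
tensor square `Ā = A ⊗ A`. -/
theorem osEbar_prod_ne_zero {α : Type*} [Fintype α] [LinearOrder α]
    (Mat : Matroid α) (hE : Mat.E = Set.univ)
    (hsimple : ∀ s t : α, Mat.Indep {s, t})
    (T₁ T₂ : Set α) (hdisj : Disjoint T₁ T₂) (hunion : T₁ ∪ T₂ = Set.univ)
    (hT₁ : Mat.Indep T₁) (hT₂ : ∀ s : α, Mat.Indep (T₂ ∪ {s})) :
    ((Finset.univ.sort (· ≤ ·)).map fun s => osEbar K Mat s).prod ≠ 0 := by
  set l := flagLevel Mat T₁
  set m := flagLevel Mat T₂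
  have hloop : ∀ s, Mat.Indep {s} := fun s => by simpa using hsimple s s
  have hT₂' : Mat.Indep T₂ := by
    by_cases h : Nonempty α
    · exact (hT₂ h.some).subset Set.subset_union_left
    · have := not_nonempty_iff.1 h
      rw [Set.eq_empty_of_isEmpty T₂]
      exact Mat.empty_indep
  have hm_top : ∀ t ∈ T₁, m t = ⊤ := fun t ht => flagLevel_eq_top fun hcl => by
    have htT₂ : t ∉ T₂ := Set.disjoint_left.1 hdisj ht
    have hi : Mat.Indep (insert t T₂) := by simpa [Set.union_singleton] using hT₂ t
    exact ((hT₂'.insert_indep_iff_of_notMem htT₂).1 hi).2 hcl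
  let φ : α ⊕ α → WithTop α ⊕ WithTop α := Sum.map l m
  let X : WithTop α → α →₀ K := fun a => WithTop.recTopCoe 0 (fun a => Finsupp.single a 1) a
  let Y : WithTop α → α →₀ K :=
    fun a => WithTop.recTopCoe 0 (fun a => Finsupp.single a 1 - X (l a)) a
  let G : (WithTop α ⊕ WithTop α →₀ K) →ₗ[K] (α →₀ K) :=
    Finsupp.linearCombination K (Sum.elim (fun a => -X a) Y)
  let F : ExteriorAlgebra K ((α ⊕ α) →₀ K) →ₐ[K] ExteriorAlgebra K (α →₀ K) :=
    (ExteriorAlgebra.map G).comp (ExteriorAlgebra.map (Finsupp.lmapDomain K K φ))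
  have hF : ∀ ⦃x y⦄, osRel₂ K Mat x y → F.toRingHom x = F.toRingHom y := by
    rintro x y ⟨rfl, p, f, -, hdep, hx⟩
    have hni : ∀ T : Set α, ¬ Function.Injective (flagLevel Mat T ∘ f) := fun T hinj =>
      hdep (indep_of_injOn_flagLevel hE hloop (T := T)
        (by
          rintro _ ⟨i, rfl⟩ _ ⟨j, rfl⟩ hij
          exact congrArg f (hinj hij)))
    have hz : ExteriorAlgebra.map (Finsupp.lmapDomain K K φ) x = 0 := by
      rcases hx with rfl | rfl
      · exact map_extBoundary_list_prod_eq_zero φ (Sum.inl ∘ f)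
          fun h => hni T₁ fun i j hij => h (congrArg Sum.inl hij)
      · exact map_extBoundary_list_prod_eq_zero φ (Sum.inr ∘ f)
          fun h => hni T₂ fun i j hij => h (congrArg Sum.inr hij)
    change ExteriorAlgebra.map G (ExteriorAlgebra.map (Finsupp.lmapDomain K K φ) x) = F 0
    rw [hz, map_zero, map_zero]
  let Φ := RingQuot.lift ⟨F.toRingHom, hF⟩
  have hΦ : ∀ s, Φ (osEbar K Mat s) = extGen K s := by
    intro s
    have hG : Y (m s) + X (l s) = Finsupp.single s 1 := by
      rcases (hunion ▸ Set.mem_univ s : s ∈ T₁ ∪ T₂) with hs | hs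
      · simp [hm_top s hs, l, flagLevel_of_mem hT₁ hs, X, Y]
      · simp [m, flagLevel_of_mem hT₂' hs, Y]
    rw [osEbar, RingQuot.lift_mkRingHom_apply]
    change ExteriorAlgebra.map G (ExteriorAlgebra.map (Finsupp.lmapDomain K K φ) _) = _
    rw [extGen, extGen, extGen, ← map_sub, ExteriorAlgebra.map_apply_ι,
      ExteriorAlgebra.map_apply_ι]
    refine congrArg (ExteriorAlgebra.ι K) ?_
    simpa [G, φ] using hG
  intro h
  have h2 := congrArg Φ h
  rw [map_list_prod, List.map_map, map_zero] at h2
  have h3 : (((Finset.univ : Finset α).sort (· ≤ ·)).map (extGen K)).prod = 0 :=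
    (congrArg List.prod (List.map_congr_left fun s _ => (hΦ s).symm)).trans h2
  exact list_prod_extGen_ne_zero _ (Finset.sort_nodup _ _) h3

end
end
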